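/- Let C(Γ) be an infinite finitely generated Coxeter group. Then C(Γ) is slender if and only if C(Γ) decomposes as a direct product C(Γ) ≅ C(Γ₁) × C(Γ₂), where Γ₁, Γ₂ are induced subgraphs of Γ, C(Γ₁) is a finite group, and C(Γ₂) is a finite direct product of irreducible Euclidean reflection groups. -/

import Mathlib

def Group.Slender (G : Type*) [Group G] : Prop := ∀ H : Subgroup G, H.FG

def Group.FinitelyPresented (G : Type*) [Group G] : Prop :=
  ∃ (n : ℕ) (rels : Set (FreeGroup (Fin n))), rels.Finite ∧ Nonempty (PresentedGroup rels ≃* G)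

def Group.Coherent (G : Type*) [Group G] : Prop :=
  ∀ H : Subgroup G, H.FG → Group.FinitelyPresented H

def SimpleGraph.NoInducedCycleGT3 {V : Type*} (Γ : SimpleGraph V) : Prop :=
  ∀ n : ℕ, 4 ≤ n → IsEmpty (SimpleGraph.cycleGraph n ↪g Γ)

/-- The restriction of a Coxeter matrix to a set of indices
(corresponding to an induced subgraph of the Coxeter graph). -/
def CoxeterMatrix.restrict {V : Type*} (M : CoxeterMatrix V) (S : Set V) : CoxeterMatrix S where
  M a b := M a b
  isSymm := Matrix.IsSymm.ext fun a b => M.isSymm.apply a b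
  diagonal a := M.diagonal a
  off_diagonal a b h := M.off_diagonal a b (fun hc => h (Subtype.ext hc))

/-- `M` is the Coxeter matrix associated to the simplicial graph `Γ` with edge labeling
`ψ : E → {2,3,4,...}` (recorded by the values of `M` on adjacent pairs): non-adjacent
distinct vertices get the label `0` (that is, `∞`: no relation). -/
def CoxeterMatrix.IsMatrixOf {V : Type*} (M : CoxeterMatrix V) (Γ : SimpleGraph V) : Prop :=
  (∀ v w, Γ.Adj v w → 2 ≤ M v w) ∧ (∀ v w, v ≠ w → ¬Γ.Adj v w → M v w = 0)

/-- An isometry of the Euclidean space `ℝᵈ` is an affine (hyperplane) reflection if it is an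
involution different from the identity whose fixed-point set is an affine hyperplane. -/
def IsAffineReflection {d : ℕ}
    (f : EuclideanSpace ℝ (Fin d) ≃ᵢ EuclideanSpace ℝ (Fin d)) : Prop :=
  f * f = 1 ∧ f ≠ 1 ∧
  ∃ s : AffineSubspace ℝ (EuclideanSpace ℝ (Fin d)),
    (s : Set (EuclideanSpace ℝ (Fin d))) = {x | f x = x} ∧
    Module.finrank ℝ s.direction + 1 = d

/-- A subgroup `W` of the isometry group of the Euclidean space `ℝᵈ` is an irreducible
Euclidean reflection group if it is generated by the affine reflections it contains, it acts
properly (properly discontinuously) on `ℝᵈ` with compact quotient, and its Coxeter diagram is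
connected, which amounts to saying that no linear subspace other than `0` and `ℝᵈ` is
invariant under the linear parts of all elements of `W`. -/
structure IsIrreducibleEuclideanReflectionSubgroup {d : ℕ}
    (W : Subgroup (EuclideanSpace ℝ (Fin d) ≃ᵢ EuclideanSpace ℝ (Fin d))) : Prop where
  generated_by_reflections : W = Subgroup.closure {f | f ∈ W ∧ IsAffineReflection f}
  properly_discontinuous : ∀ K L : Set (EuclideanSpace ℝ (Fin d)), IsCompact K → IsCompact L →
    {f : EuclideanSpace ℝ (Fin d) ≃ᵢ EuclideanSpace ℝ (Fin d) |
      f ∈ W ∧ (f '' K ∩ L).Nonempty}.Finite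
  compact_quotient : ∃ K : Set (EuclideanSpace ℝ (Fin d)), IsCompact K ∧
    ∀ x : EuclideanSpace ℝ (Fin d), ∃ f ∈ W, f x ∈ K
  irreducible : ∀ U : Submodule ℝ (EuclideanSpace ℝ (Fin d)),
    (∀ f ∈ W, ∀ x y : EuclideanSpace ℝ (Fin d), x - y ∈ U → f x - f y ∈ U) →
    U = ⊥ ∨ U = ⊤

/-!
Since commuting components of the Coxeter diagram split off as direct factors and slenderness
passes to subgroups, one may assume the diagram connected. By the Perron–Frobenius theorem the
cosine matrix `A` then has a positive eigenvector `v`, say `A v = m v`, and `A - m` is positive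
semidefinite. If `m > 0` the group is finite. If `m = 0` the dual of the geometric representation
makes it an irreducible Euclidean reflection group, with an alcove as fundamental domain. If `m < 0`
there are two roots spanning a hyperbolic plane; moving a third root by powers of the product of the
two reflections gives infinitely many reflections whose fixed walls bound disjoint half-spaces, and
these generate a free product of infinitely many copies of `ℤ/2`, which is not finitely generated.

Conversely, a Euclidean reflection group is an extension of a finite point group by a lattice, and
slenderness is inherited by extensions.
-/

section ChebyshevValues

open Polynomial.Chebyshev Real

theorem chebyshevU_eval_cos_pi_div_nonneg {m n : ℕ} (hm : 2 ≤ m) (hn : n ≤ m) :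
    0 ≤ (U ℝ ((n : ℤ) - 1)).eval (cos (π / m)) := by
  have hm' : (2 : ℝ) ≤ m := by exact_mod_cast hm
  have hsin : 0 < sin (π / m) :=
    sin_pos_of_pos_of_lt_pi (by positivity) (div_lt_self pi_pos (by linarith))
  refine nonneg_of_mul_nonneg_left ?_ hsin
  rw [U_real_cos]
  push_cast
  rw [sub_add_cancel]
  refine sin_nonneg_of_nonneg_of_le_pi (by positivity) ?_
  rw [mul_div_assoc', div_le_iff₀ (by linarith), mul_comm]
  exact mul_le_mul_of_nonneg_left (by exact_mod_cast hn) pi_pos.le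

theorem chebyshevU_eval_nonneg_of_one_le {c : ℝ} (hc : 1 ≤ c) (n : ℕ) :
    0 ≤ (U ℝ ((n : ℤ) - 1)).eval c := by
  suffices h : 0 ≤ (U ℝ ((n : ℤ) - 1)).eval c ∧
      (U ℝ ((n : ℤ) - 1)).eval c ≤ (U ℝ (n : ℤ)).eval c from h.1
  induction n with
  | zero => simp
  | succ n ih =>
    have hrec : (U ℝ ((n : ℤ) + 1)).eval c =
        2 * c * (U ℝ (n : ℤ)).eval c - (U ℝ ((n : ℤ) - 1)).eval c := by
      rw [U_add_one]; simp
    push_cast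
    rw [add_sub_cancel_right, hrec]
    constructor <;> nlinarith

theorem chebyshevS_eval_eq_zero_of_even {k : ℕ} (hk : 2 ≤ k) :
    (S ℝ ((k : ℤ) - 1)).eval (2 * cos (2 * π / (2 * k : ℕ))) = 0 := by
  have hk' : (2 : ℝ) ≤ k := by exact_mod_cast hk
  have hangle : 2 * π / (2 * k : ℕ) = π / k := by push_cast; field_simp
  have hsin : sin (π / k) ≠ 0 :=
    (sin_pos_of_pos_of_lt_pi (by positivity) (div_lt_self pi_pos (by linarith))).ne'
  refine (mul_eq_zero_iff_right hsin).mp ?_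
  rw [hangle, S_two_mul_real_cos]
  push_cast
  rw [sub_add_cancel, mul_div_cancel₀ _ (by positivity), sin_pi]

theorem chebyshevS_eval_add_eq_zero_of_odd {k : ℕ} (hk : 1 ≤ k) :
    (S ℝ (k : ℤ)).eval (2 * cos (2 * π / (2 * k + 1 : ℕ))) +
      (S ℝ ((k : ℤ) - 1)).eval (2 * cos (2 * π / (2 * k + 1 : ℕ))) = 0 := by
  have hk' : (1 : ℝ) ≤ k := by exact_mod_cast hk
  set θ : ℝ := 2 * π / (2 * k + 1 : ℕ) with hθ
  have hsin : sin θ ≠ 0 := by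
    refine (sin_pos_of_pos_of_lt_pi (by positivity) ?_).ne'
    rw [hθ, div_lt_iff₀ (by positivity)]
    push_cast
    nlinarith [pi_pos]
  refine (mul_eq_zero_iff_right hsin).mp ?_
  have hangle : ((k : ℝ) + 1) * θ = 2 * π - k * θ := by
    rw [hθ]; push_cast; field_simp; ring
  rw [add_mul, S_two_mul_real_cos, S_two_mul_real_cos]
  push_cast
  rw [sub_add_cancel, hangle, sin_two_pi_sub, neg_add_cancel]

end ChebyshevValues

section RootReflection

variable {V : Type*} [AddCommGroup V] [Module ℝ V] {B : LinearMap.BilinForm ℝ V}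

/-- The reflection `y ↦ y - 2 B(x, y) x` in a vector `x` with `B(x, x) = 1`. -/
noncomputable def rootReflection (B : LinearMap.BilinForm ℝ V) (x : V) : Module.End ℝ V :=
  Module.preReflection x (2 • B x)

theorem rootReflection_apply (x y : V) : rootReflection B x y = y - (2 * B x y) • x := by
  simp [rootReflection, Module.preReflection_apply]

theorem rootReflection_apply_self {x : V} (hx : B x x = 1) : rootReflection B x x = -x := by
  rw [rootReflection_apply, hx]; module

theorem rootReflection_mul_self {x : V} (hx : B x x = 1) :
    rootReflection B x * rootReflection B x = 1 := by
  ext y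
  simp only [Module.End.mul_apply, rootReflection_apply, map_sub, map_smul, hx,
    Module.End.one_apply]
  module

theorem apply_rootReflection_rootReflection (hB : B.IsSymm) {x : V} (hx : B x x = 1) (y z : V) :
    B (rootReflection B x y) (rootReflection B x z) = B y z := by
  simp only [rootReflection_apply, map_sub, map_smul, LinearMap.sub_apply, LinearMap.smul_apply,
    smul_eq_mul, hx, hB.eq y x]
  ring

open Polynomial.Chebyshev Real in
/-- The braid relation: if `B(x, y) = -cos(π / m)`, the product of the reflections in `x` and `y`
is a rotation by `2π / m`. -/
theorem rootReflection_mul_pow_eq_one (hB : B.IsSymm) {x y : V} (hx : B x x = 1) (hy : B y y = 1)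
    {m : ℕ} (hm : 2 ≤ m) (hxy : B x y = -cos (π / m)) :
    (rootReflection B x * rootReflection B y) ^ m = 1 := by
  rcases hm.eq_or_lt with rfl | hm
  · have h0 : B x y = 0 := by simp [hxy]
    ext z
    simp only [pow_two, Module.End.mul_apply, rootReflection_apply, map_sub, map_smul, hx, hy, h0,
      hB.eq y x, Module.End.one_apply]
    module
  have hfx : (2 • B x) x = 2 := by simp [hx]
  have hgy : (2 • B y) y = 2 := by simp [hy]
  have ht : 2 * cos (2 * π / m) = (2 • B x) y * (2 • B y) x - 2 := by
    rw [mul_div_assoc, cos_two_mul]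
    simp only [LinearMap.smul_apply, nsmul_eq_mul, Nat.cast_ofNat, hB.eq y x, hxy]
    ring
  have hpow := Module.reflection_mul_reflection_pow hfx hgy m _ ht
  have hlhs : ((Module.reflection hfx * Module.reflection hgy) ^ m).toLinearMap =
      (rootReflection B x * rootReflection B y) ^ m :=
    map_pow LinearEquiv.automorphismGroup.toLinearMapMonoidHom
      (Module.reflection hfx * Module.reflection hgy) m
  rw [← hlhs, hpow]
  rcases m.even_or_odd' with ⟨k, rfl | rfl⟩
  · have h1 : (((2 * k : ℕ) : ℤ) - 2) / 2 = k - 1 := by lia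
    have h2 : (((2 * k : ℕ) : ℤ) - 1) / 2 = k - 1 := by lia
    rw [h1, h2, chebyshevS_eval_eq_zero_of_even (by lia)]
    simp only [zero_mul, zero_smul, add_zero]
    rfl
  · have h1 : (((2 * k + 1 : ℕ) : ℤ) - 1) / 2 = k := by lia
    have h2 : (((2 * k + 1 : ℕ) : ℤ) - 3) / 2 = k - 1 := by lia
    have h3 : ((2 * k + 1 : ℕ) : ℤ) / 2 = k := by lia
    have h4 : (((2 * k + 1 : ℕ) : ℤ) - 2) / 2 = k - 1 := by lia
    rw [h1, h2, h3, h4, chebyshevS_eval_add_eq_zero_of_odd (by lia)]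
    simp only [mul_zero, zero_smul, add_zero]
    rfl

end RootReflection

section GeometricRepresentation

open CoxeterSystem Polynomial.Chebyshev Real Set

variable {ι W V : Type*} [Group W] {M : CoxeterMatrix ι} (cs : CoxeterSystem M W)
  [AddCommGroup V] [Module ℝ V] {B : LinearMap.BilinForm ℝ V} {a : ι → V}

/-- Simple roots for the Coxeter matrix `M`: vectors, not necessarily linearly independent, whose
products are the cosines prescribed by `M`, any value `≤ -1` being allowed for the label `∞`. -/
structure IsRootBasis (M : CoxeterMatrix ι) (B : LinearMap.BilinForm ℝ V) (a : ι → V) : Prop where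
  symm : B.IsSymm
  apply_eq : ∀ i j, M i j ≠ 0 → B (a i) (a j) = -cos (π / M i j)
  apply_le : ∀ i j, M i j = 0 → B (a i) (a j) ≤ -1

namespace IsRootBasis

theorem apply_self (h : IsRootBasis M B a) (i : ι) : B (a i) (a i) = 1 := by
  simp [h.apply_eq i i]

theorem isLiftable (h : IsRootBasis M B a) : M.IsLiftable fun i => rootReflection B (a i) := by
  intro i j
  rcases eq_or_ne i j with rfl | hij
  · rw [M.diagonal, pow_one, rootReflection_mul_self (h.apply_self i)]
  rcases eq_or_ne (M i j) 0 with h0 | h0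
  · rw [h0, pow_zero]
  have := M.off_diagonal i j hij
  exact rootReflection_mul_pow_eq_one h.symm (h.apply_self i) (h.apply_self j) (by lia)
    (h.apply_eq i j h0)

/-- The geometric representation: the simple generators act as reflections in the simple roots. -/
noncomputable def geomRep (h : IsRootBasis M B a) : W →* Module.End ℝ V :=
  cs.lift ⟨_, h.isLiftable⟩

theorem geomRep_simple (h : IsRootBasis M B a) (i : ι) :
    h.geomRep cs (cs.simple i) = rootReflection B (a i) :=
  cs.lift_apply_simple h.isLiftable i

theorem apply_geomRep_geomRep (h : IsRootBasis M B a) (w : W) (x y : V) :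
    B (h.geomRep cs w x) (h.geomRep cs w y) = B x y := by
  induction w using cs.simple_induction_left with
  | one => simp
  | mul_simple_left w i ih =>
    simp only [map_mul, Module.End.mul_apply, geomRep_simple,
      apply_rootReflection_rootReflection h.symm (h.apply_self i), ih]

theorem geomRep_alternatingWord (h : IsRootBasis M B a) (i j : ι) (k : ℕ) :
    h.geomRep cs (cs.wordProd (alternatingWord i j k)) (a i) =
      (U ℝ (k : ℤ)).eval (-B (a i) (a j)) • a (if Even k then i else j) +
        (U ℝ ((k : ℤ) - 1)).eval (-B (a i) (a j)) • a (if Even k then j else i) := by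
  induction k with
  | zero => simp [alternatingWord]
  | succ k ih =>
    rw [alternatingWord_succ', wordProd_cons, map_mul, Module.End.mul_apply, ih, geomRep_simple]
    push_cast
    rw [U_add_one, add_sub_cancel_right]
    have hji := h.symm.eq (a i) (a j)
    rcases Nat.even_or_odd k with hk | hk
    · simp only [Nat.even_add_one, hk, not_true, if_true, if_false, rootReflection_apply, map_add,
        map_smul, h.apply_self, hji, Polynomial.eval_sub, Polynomial.eval_mul,
        Polynomial.eval_X, Polynomial.eval_ofNat]
      module
    · simp only [Nat.even_add_one, Nat.not_even_iff_odd.mpr hk, not_false_eq_true, if_true,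
        if_false, rootReflection_apply, map_add, map_smul, h.apply_self, hji,
        Polynomial.eval_sub, Polynomial.eval_mul, Polynomial.eval_X, Polynomial.eval_ofNat]
      module

end IsRootBasis

theorem exists_eq_mul_alternatingWord (w : W) (i j : ι) (hi : ¬cs.IsRightDescent w i) :
    ∃ (v : W) (k : ℕ), w = v * cs.wordProd (alternatingWord i j k) ∧
      cs.length v + k = cs.length w ∧ ¬cs.IsRightDescent v i ∧ ¬cs.IsRightDescent v j := by
  induction hn : cs.length w using Nat.strong_induction_on generalizing w i j with
  | _ n ih =>
    by_cases hj : cs.IsRightDescent w j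
    · have hlen := cs.isRightDescent_iff.mp hj
      obtain ⟨v, k, hv, hk, hvj, hvi⟩ := ih _ (by lia) (w * cs.simple j) j i
        (cs.isRightDescent_iff_not_isRightDescent_mul.mp hj) rfl
      refine ⟨v, k + 1, ?_, by lia, hvi, hvj⟩
      rw [alternatingWord_succ, wordProd_concat, ← mul_assoc, ← hv,
        cs.simple_mul_simple_cancel_right]
    · exact ⟨w, 0, by simp [alternatingWord], by simpa using hn, hi, hj⟩

theorem lt_of_not_isRightDescent_mul_alternatingWord {v : W} {i j : ι} {k : ℕ} (hM : M i j ≠ 0)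
    (hlen : cs.length v + k = cs.length (v * cs.wordProd (alternatingWord i j k)))
    (hi : ¬cs.IsRightDescent (v * cs.wordProd (alternatingWord i j k)) i) : k < M i j := by
  by_contra! hk
  refine cs.not_isReduced_alternatingWord j i (m := k + 1) (by rwa [M.symmetric])
    (by rw [M.symmetric]; lia) ?_
  have h1 := cs.not_isRightDescent_iff.mp hi
  have h2 := cs.length_mul_le v (cs.wordProd (alternatingWord j i (k + 1)))
  have h3 := cs.length_wordProd_le (alternatingWord j i (k + 1))
  rw [mul_assoc, ← wordProd_concat, ← alternatingWord_succ] at h1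
  rw [length_alternatingWord] at h3
  rw [CoxeterSystem.IsReduced, length_alternatingWord]
  lia

namespace IsRootBasis

theorem chebyshevU_eval_nonneg (h : IsRootBasis M B a) {i j : ι} (hij : i ≠ j) {k : ℕ}
    (hk : M i j ≠ 0 → k ≤ M i j) : 0 ≤ (U ℝ ((k : ℤ) - 1)).eval (-B (a i) (a j)) := by
  rcases eq_or_ne (M i j) 0 with h0 | h0
  · exact chebyshevU_eval_nonneg_of_one_le (by linarith [h.apply_le i j h0]) k
  · have := M.off_diagonal i j hij
    rw [h.apply_eq i j h0, neg_neg]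
    exact chebyshevU_eval_cos_pi_div_nonneg (by lia) (hk h0)

theorem geomRep_mem_hull (h : IsRootBasis M B a) {w : W} {i : ι}
    (hi : ¬cs.IsRightDescent w i) : h.geomRep cs w (a i) ∈ PointedCone.hull ℝ (range a) := by
  induction hn : cs.length w using Nat.strong_induction_on generalizing w i with
  | _ n ih =>
    rcases eq_or_ne w 1 with rfl | hw
    · simpa using Submodule.subset_span (mem_range_self i)
    obtain ⟨j, hj⟩ := cs.exists_rightDescent_of_ne_one hw
    have hij : i ≠ j := by rintro rfl; exact hi hj
    obtain ⟨v, k, rfl, hlen, hvi, hvj⟩ := exists_eq_mul_alternatingWord cs w i j hi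
    have hk : k ≠ 0 := by
      rintro rfl
      exact hvj (by simpa [alternatingWord] using hj)
    have hvi_mem := ih _ (by lia) hvi rfl
    have hvj_mem := ih _ (by lia) hvj rfl
    have hbound : M i j ≠ 0 → k < M i j := fun h0 =>
      lt_of_not_isRightDescent_mul_alternatingWord cs h0 hlen hi
    have hU₁ := h.chebyshevU_eval_nonneg hij (k := k + 1) hbound
    have hU₀ := h.chebyshevU_eval_nonneg hij (k := k) fun h0 => (hbound h0).le
    push_cast at hU₁
    rw [add_sub_cancel_right] at hU₁
    rw [map_mul, Module.End.mul_apply, geomRep_alternatingWord, map_add, map_smul, map_smul]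
    split_ifs
    · exact add_mem (Submodule.smul_mem _ ⟨_, hU₁⟩ hvi_mem)
        (Submodule.smul_mem _ ⟨_, hU₀⟩ hvj_mem)
    · exact add_mem (Submodule.smul_mem _ ⟨_, hU₁⟩ hvj_mem)
        (Submodule.smul_mem _ ⟨_, hU₀⟩ hvi_mem)

theorem geomRep_mul_simple_apply_self (h : IsRootBasis M B a) (w : W) (i : ι) :
    h.geomRep cs (w * cs.simple i) (a i) = -h.geomRep cs w (a i) := by
  rw [map_mul, Module.End.mul_apply, geomRep_simple, rootReflection_apply_self (h.apply_self i),
    map_neg]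

theorem neg_geomRep_mem_hull (h : IsRootBasis M B a) {w : W} {i : ι}
    (hi : cs.IsRightDescent w i) : -h.geomRep cs w (a i) ∈ PointedCone.hull ℝ (range a) := by
  rw [← geomRep_mul_simple_apply_self]
  exact h.geomRep_mem_hull cs (cs.isRightDescent_iff_not_isRightDescent_mul.mp hi)

theorem geomRep_sub_mem_hull (h : IsRootBasis M B a) {v : V} (hv : ∀ i, B (a i) v ≤ 0) (w : W) :
    h.geomRep cs w v - v ∈ PointedCone.hull ℝ (range a) := by
  induction hn : cs.length w using Nat.strong_induction_on generalizing w with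
  | _ n ih =>
    rcases eq_or_ne w 1 with rfl | hw
    · simp
    obtain ⟨i, hi⟩ := cs.exists_rightDescent_of_ne_one hw
    have hlen := cs.isRightDescent_iff.mp hi
    have hstep : h.geomRep cs w v - v = (h.geomRep cs (w * cs.simple i) v - v) +
        (-(2 * B (a i) v)) • -h.geomRep cs w (a i) := by
      have hsimple : h.geomRep cs w v = h.geomRep cs (w * cs.simple i)
          (rootReflection B (a i) v) := by
        rw [← h.geomRep_simple cs, ← Module.End.mul_apply, ← map_mul,
          cs.simple_mul_simple_cancel_right]
      rw [hsimple, rootReflection_apply, map_sub, map_smul,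
        geomRep_mul_simple_apply_self]
      module
    rw [hstep]
    exact add_mem (ih _ (by lia) _ rfl)
      (Submodule.smul_mem _ ⟨_, by linarith [hv i]⟩ (h.neg_geomRep_mem_hull cs hi))

end IsRootBasis

end GeometricRepresentation

section ReflectionCriterion

open Set

theorem exists_iSup_eq_of_fg {G : Type*} [Group G] {K : ℕ → Subgroup G} (hK : Monotone K)
    (h : (⨆ n, K n).FG) : ∃ n, ⨆ n, K n = K n := by
  obtain ⟨S, hS⟩ := h
  have hsub : (S : Set G) ⊆ ⋃ n, (K n : Set G) := by
    rw [← Subgroup.coe_iSup_of_directed hK.directed_le, ← hS]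
    exact Subgroup.subset_closure
  obtain ⟨n, hn⟩ := (directed_of_isDirected_le (f := fun n => (K n : Set G))
    fun _ _ h => hK h).exists_mem_subset_of_finset_subset_biUnion hsub
  refine ⟨n, le_antisymm ?_ (le_iSup K n)⟩
  rwa [← hS, Subgroup.closure_le]

/-- The Coxeter matrix of the universal Coxeter group, the free product of copies of `ℤ/2`: all
labels are `∞`. -/
def universalCoxeterMatrix (ι : Type*) [DecidableEq ι] : CoxeterMatrix ι where
  M i j := if i = j then 1 else 0
  isSymm := Matrix.IsSymm.ext fun i j => by simp [eq_comm]
  diagonal i := by simp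
  off_diagonal i j h := by simp [h]

variable {G V : Type*} [Group G] [AddCommGroup V] [Module ℝ V] {B : LinearMap.BilinForm ℝ V}

theorem isRootBasis_universalCoxeterMatrix {ι : Type*} [DecidableEq ι] {γ : ι → V}
    (hB : B.IsSymm) (hγ : ∀ n, B (γ n) (γ n) = 1)
    (hγγ : Pairwise fun m n => B (γ m) (γ n) ≤ -1) :
    IsRootBasis (universalCoxeterMatrix ι) B γ where
  symm := hB
  apply_eq i j hij := by
    obtain rfl : i = j := by_contra fun h => hij (by simp [universalCoxeterMatrix, h])
    simp [hγ]
  apply_le i j hij := by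
    refine hγγ fun h => ?_
    simp [universalCoxeterMatrix, h] at hij

theorem le_apply_of_mem_closure_reflections {ι : Type*} {γ : ι → V} {φ : V →ₗ[ℝ] ℝ}
    (ρ : G →* Module.End ℝ V) (hB : B.IsSymm) (hγ : ∀ n, B (γ n) (γ n) = 1)
    (hγγ : Pairwise fun m n => B (γ m) (γ n) ≤ -1) (hφ : ∀ n, 0 ≤ φ (γ n)) {t : ι → G}
    (ht : ∀ n, t n * t n = 1) (hρ : ∀ n, ρ (t n) = rootReflection B (γ n))
    {v : V} (hv : ∀ n, B (γ n) v ≤ 0) {g : G} (hg : g ∈ Subgroup.closure (range t)) :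
    φ v ≤ φ (ρ g v) := by
  classical
  have hroot := isRootBasis_universalCoxeterMatrix hB hγ hγγ
  let cs := (universalCoxeterMatrix ι).toCoxeterSystem
  have hlift : (universalCoxeterMatrix ι).IsLiftable t := by
    intro i j
    rcases eq_or_ne i j with rfl | hij
    · rw [CoxeterMatrix.diagonal, pow_one, ht]
    · simp [universalCoxeterMatrix, hij]
  have hcomp : ρ.comp (cs.lift ⟨t, hlift⟩) = hroot.geomRep cs :=
    cs.ext_simple fun i => by simp [cs.lift_apply_simple hlift, hroot.geomRep_simple cs, hρ]
  obtain ⟨w, rfl⟩ : g ∈ (cs.lift ⟨t, hlift⟩).range := by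
    refine (Subgroup.closure_le _).mpr ?_ hg
    rintro _ ⟨i, rfl⟩
    exact ⟨cs.simple i, cs.lift_apply_simple hlift i⟩
  have hcone : PointedCone.hull ℝ (range γ) ≤ PointedCone.comap φ (PointedCone.positive ℝ ℝ) :=
    Submodule.span_le.mpr (by rintro _ ⟨n, rfl⟩; exact hφ n)
  have hmem := hcone (hroot.geomRep_sub_mem_hull cs hv w)
  rw [← hcomp] at hmem
  simpa using hmem

/-- `φ` is positive on the images of `γ n` under the group generated by the previous reflections,
while the `n`-th reflection sends `γ n` to `-γ n`; so the groups generated by the first `n`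
reflections strictly increase. -/
theorem not_slender_of_reflections {γ : ℕ → V} {φ : V →ₗ[ℝ] ℝ}
    (ρ : G →* Module.End ℝ V) (hB : B.IsSymm) (hγ : ∀ n, B (γ n) (γ n) = 1)
    (hγγ : Pairwise fun m n => B (γ m) (γ n) ≤ -1) (hφ : ∀ n, 0 < φ (γ n)) {t : ℕ → G}
    (ht : ∀ n, t n * t n = 1) (hρ : ∀ n, ρ (t n) = rootReflection B (γ n)) :
    ¬Group.Slender G := by
  intro hG
  let K : ℕ → Subgroup G := fun N => Subgroup.closure (range fun n : Iio N => t n)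
  have hK : Monotone K := fun M N hMN => Subgroup.closure_mono (by
    rintro _ ⟨n, rfl⟩
    exact ⟨⟨n, n.2.trans_le hMN⟩, rfl⟩)
  obtain ⟨N, hN⟩ := exists_iSup_eq_of_fg hK (hG _)
  have hmem : t N ∈ K N := by
    rw [← hN]
    exact le_iSup K (N + 1) (Subgroup.subset_closure ⟨⟨N, N.lt_succ_self⟩, rfl⟩)
  have hle := le_apply_of_mem_closure_reflections ρ hB (fun n : Iio N => hγ n)
    (fun m n hmn => hγγ fun h => hmn (Subtype.ext h)) (fun n => (hφ n).le) (fun n => ht n)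
    (fun n => hρ n) (v := γ N) (fun n => (hγγ n.2.ne).trans (by norm_num)) hmem
  rw [hρ, rootReflection_apply_self (hγ N), map_neg] at hle
  linarith [hφ N]

end ReflectionCriterion

section HyperbolicPlane

open Filter Topology

variable {G V : Type*} [Group G] [AddCommGroup V] [Module ℝ V]
  {ρ : G →* Module.End ℝ V} {B : LinearMap.BilinForm ℝ V}

/-- The sign, for large `n`, of the product of the two hyperbolic coordinates of the reflection of
`(y (L ^ n)⁻¹, x L ^ n)` in `(x L ^ n, y (L ^ n)⁻¹)`. After multiplication by `(L ^ n)⁻¹ ^ 4` it is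
a polynomial in `(L ^ n)⁻¹` with constant term `-2 x ^ 4 E Q`. -/
theorem exists_coord_mul_pos {L x y E Q : ℝ} (hL : 1 < L) (hE : E < 0) (hQ : 0 < Q) (hx : x ≠ 0)
    (hxy : 2 * x * y * E + Q = 1) :
    ∃ n : ℕ, let T := -((x * L ^ n * (x * L ^ n) + y * (L ^ n)⁻¹ * (y * (L ^ n)⁻¹)) * E + Q)
      0 < (y * (L ^ n)⁻¹ + 2 * T * (x * L ^ n)) * (x * L ^ n + 2 * T * (y * (L ^ n)⁻¹)) := by
  let S : ℝ → ℝ := fun I => -((x ^ 2 + y ^ 2 * I ^ 4) * E + Q * I ^ 2)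
  let p : ℝ → ℝ := fun I => (y * I ^ 4 + 2 * S I * x) * (x + 2 * S I * y)
  have hp_zero : 0 < p 0 := by
    have : p 0 = 2 * x ^ 4 * Q * -E := by
      simp only [p, S]
      linear_combination (2 * x ^ 4 * E) * hxy
    rw [this]
    exact mul_pos (by positivity) (neg_pos.mpr hE)
  have hp : Continuous p := by fun_prop
  have hlim : Tendsto (fun n : ℕ => p ((L ^ n)⁻¹)) atTop (𝓝 (p 0)) := by
    refine (hp.tendsto 0).comp ?_
    simp only [← inv_pow]
    exact tendsto_pow_atTop_nhds_zero_of_lt_one (by positivity) (inv_lt_one_of_one_lt₀ hL)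
  obtain ⟨n, hn⟩ := (hlim.eventually (lt_mem_nhds hp_zero)).exists
  refine ⟨n, ?_⟩
  have hLn : 0 < L ^ n := by positivity
  have hscale : p ((L ^ n)⁻¹) = (L ^ n)⁻¹ ^ 4 *
      ((y * (L ^ n)⁻¹ + 2 * -((x * L ^ n * (x * L ^ n) + y * (L ^ n)⁻¹ * (y * (L ^ n)⁻¹)) * E + Q)
        * (x * L ^ n)) *
      (x * L ^ n + 2 * -((x * L ^ n * (x * L ^ n) + y * (L ^ n)⁻¹ * (y * (L ^ n)⁻¹)) * E + Q)
        * (y * (L ^ n)⁻¹))) := by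
    simp only [p, S]
    field_simp
  rw [hscale] at hn
  exact pos_of_mul_pos_right hn (by positivity)

/-- A root of the representation `ρ`: a vector with `B(z, z) = 1` in which an involution of `G`
acts as the reflection. -/
def IsRealizedRoot (ρ : G →* Module.End ℝ V) (B : LinearMap.BilinForm ℝ V) (z : V) : Prop :=
  B z z = 1 ∧ ∃ t : G, t * t = 1 ∧ ρ t = rootReflection B z

namespace IsRealizedRoot

theorem map {z : V} (hz : IsRealizedRoot ρ B z) (hρ : ∀ g x y, B (ρ g x) (ρ g y) = B x y)
    (g : G) : IsRealizedRoot ρ B (ρ g z) := by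
  obtain ⟨hz, t, ht, htz⟩ := hz
  refine ⟨by rw [hρ, hz], g * t * g⁻¹, ?_, ?_⟩
  · calc g * t * g⁻¹ * (g * t * g⁻¹) = g * (t * t) * g⁻¹ := by group
      _ = 1 := by rw [ht, mul_one, mul_inv_cancel]
  · ext y
    have hgg : ρ g (ρ g⁻¹ y) = y := by
      rw [← Module.End.mul_apply, ← map_mul, mul_inv_cancel, map_one, Module.End.one_apply]
    have hzy : B z (ρ g⁻¹ y) = B (ρ g z) y := by rw [← hρ g, hgg]
    simp only [map_mul, Module.End.mul_apply, htz, rootReflection_apply, map_sub, map_smul, hgg,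
      hzy]

theorem rootReflection {y z : V} (hz : IsRealizedRoot ρ B z) (hy : IsRealizedRoot ρ B y)
    (hρ : ∀ g x y, B (ρ g x) (ρ g y) = B x y) :
    IsRealizedRoot ρ B (_root_.rootReflection B z y) := by
  obtain ⟨-, t, -, ht⟩ := hz
  rw [← ht]
  exact hy.map hρ t

end IsRealizedRoot

/-- A hyperbolic plane, spanned by two isotropic vectors, which an element `boost` of `G` stretches
along its isotropic lines and whose isotropic vectors are exchanged by an element `swap`; both act
trivially on the orthogonal complement. -/
structure HyperbolicFrame (ρ : G →* Module.End ℝ V) (B : LinearMap.BilinForm ℝ V) where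
  e₁ : V
  e₂ : V
  scale : ℝ
  boost : G
  swap : G
  apply_e₁_e₁ : B e₁ e₁ = 0
  apply_e₂_e₂ : B e₂ e₂ = 0
  apply_e₁_e₂_neg : B e₁ e₂ < 0
  one_lt_scale : 1 < scale
  boost_e₁ : ρ boost e₁ = scale • e₁
  boost_e₂ : ρ boost e₂ = scale⁻¹ • e₂
  boost_orthogonal : ∀ q, B e₁ q = 0 → B e₂ q = 0 → ρ boost q = q
  swap_e₁ : ρ swap e₁ = e₂
  swap_e₂ : ρ swap e₂ = e₁
  swap_orthogonal : ∀ q, B e₁ q = 0 → B e₂ q = 0 → ρ swap q = q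

namespace HyperbolicFrame

variable (F : HyperbolicFrame ρ B) {q : V} (hq₁ : B F.e₁ q = 0) (hq₂ : B F.e₂ q = 0)
include hq₁ hq₂

theorem apply_apply (hB : B.IsSymm) (x y x' y' s s' : ℝ) :
    B (x • F.e₁ + y • F.e₂ + s • q) (x' • F.e₁ + y' • F.e₂ + s' • q) =
      (x * y' + y * x') * B F.e₁ F.e₂ + s * s' * B q q := by
  simp only [map_add, map_smul, LinearMap.add_apply, LinearMap.smul_apply, smul_eq_mul,
    F.apply_e₁_e₁, F.apply_e₂_e₂, hq₁, hq₂, hB.eq F.e₂ F.e₁, hB.eq q F.e₁, hB.eq q F.e₂]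
  ring

theorem boost_pow_apply (x y : ℝ) (n : ℕ) :
    ρ (F.boost ^ n) (x • F.e₁ + y • F.e₂ + q) =
      (x * F.scale ^ n) • F.e₁ + (y * (F.scale ^ n)⁻¹) • F.e₂ + q := by
  induction n with
  | zero => simp
  | succ n ih =>
    rw [pow_succ', map_mul, Module.End.mul_apply, ih]
    simp only [map_add, map_smul, F.boost_e₁, F.boost_e₂, F.boost_orthogonal q hq₁ hq₂, smul_smul,
      pow_succ, mul_inv, mul_assoc]

theorem swap_apply (x y : ℝ) :
    ρ F.swap (x • F.e₁ + y • F.e₂ + q) = y • F.e₁ + x • F.e₂ + q := by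
  rw [map_add, map_add, map_smul, map_smul, F.swap_e₁, F.swap_e₂, F.swap_orthogonal q hq₁ hq₂,
    add_comm (x • _)]

theorem exists_forall_apply_boost_pow_le (hB : B.IsSymm) {x y : ℝ} (hxy : 0 < x * y)
    (hz : B (x • F.e₁ + y • F.e₂ + q) (x • F.e₁ + y • F.e₂ + q) = 1) :
    ∃ k : ℕ, ∀ n, k ≤ n → B (x • F.e₁ + y • F.e₂ + q)
      (ρ (F.boost ^ n) (x • F.e₁ + y • F.e₂ + q)) ≤ -1 := by
  set E := B F.e₁ F.e₂
  have happly : ∀ x' y', B (x • F.e₁ + y • F.e₂ + q) (x' • F.e₁ + y' • F.e₂ + q) =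
      (x * y' + y * x') * E + B q q := fun x' y' => by
    simpa using F.apply_apply hq₁ hq₂ hB x y x' y' 1 1
  have hxyE : x * y * E < 0 := mul_neg_of_pos_of_neg hxy F.apply_e₁_e₂_neg
  obtain ⟨k, hk⟩ := pow_unbounded_of_one_lt (2 + 2 / -(x * y * E)) F.one_lt_scale
  refine ⟨k, fun n hn => ?_⟩
  have hscale : 0 < F.scale := one_pos.trans F.one_lt_scale
  have hfar : x * y * E * (F.scale ^ k - 2) ≤ -2 := by
    have := (div_le_iff₀ (neg_pos.mpr hxyE)).mp
      (show 2 / -(x * y * E) ≤ F.scale ^ k - 2 by linarith)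
    linarith
  have hpow : F.scale ^ k ≤ F.scale ^ n := pow_le_pow_right₀ F.one_lt_scale.le hn
  have hinv : 0 < (F.scale ^ n)⁻¹ := by positivity
  calc B (x • F.e₁ + y • F.e₂ + q) (ρ (F.boost ^ n) (x • F.e₁ + y • F.e₂ + q))
      = 1 + x * y * E * (F.scale ^ n + (F.scale ^ n)⁻¹ - 2) := by
        rw [F.boost_pow_apply hq₁ hq₂, happly, ← hz, happly]
        ring
    _ ≤ 1 + x * y * E * (F.scale ^ k - 2) := by
        gcongr 1 + ?_
        exact mul_le_mul_of_nonpos_left (by linarith) hxyE.le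
    _ ≤ -1 := by linarith

theorem not_slender_of_mul_pos (hB : B.IsSymm) (hρ : ∀ g x y, B (ρ g x) (ρ g y) = B x y) {x y : ℝ}
    (hz : IsRealizedRoot ρ B (x • F.e₁ + y • F.e₂ + q)) (hxy : 0 < x * y) :
    ¬Group.Slender G := by
  obtain ⟨k, hk⟩ := F.exists_forall_apply_boost_pow_le hq₁ hq₂ hB hxy hz.1
  set z := x • F.e₁ + y • F.e₂ + q
  let γ : ℕ → V := fun n => ρ (F.boost ^ (k * n)) z
  have hγ : ∀ n, IsRealizedRoot ρ B (γ n) := fun n => hz.map hρ _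
  choose hγ_self t ht htγ using hγ
  have hγγ : ∀ m n, m < n → B (γ m) (γ n) ≤ -1 := by
    intro m n hmn
    obtain ⟨d, rfl⟩ := Nat.exists_eq_add_of_lt hmn
    have : B (γ m) (γ (m + d + 1)) = B z (ρ (F.boost ^ (k * (d + 1))) z) := by
      simp only [γ]
      rw [add_assoc, mul_add k m, pow_add, map_mul, Module.End.mul_apply, hρ]
    rw [this]
    exact hk _ (Nat.le_mul_of_pos_right k d.succ_pos)
  refine not_slender_of_reflections ρ hB hγ_self (φ := (-y) • B F.e₁) (fun m n hmn => ?_)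
    (fun n => ?_) ht htγ
  · rcases hmn.lt_or_gt with h | h
    · exact hγγ m n h
    · exact (hB.eq _ _).symm.trans_le (hγγ n m h)
  · have hy : y ≠ 0 := right_ne_zero_of_mul hxy.ne'
    have hscale : 0 < F.scale := one_pos.trans F.one_lt_scale
    have : ((-y) • B F.e₁) (γ n) = y ^ 2 * (F.scale ^ (k * n))⁻¹ * -B F.e₁ F.e₂ := by
      simp only [γ, z, F.boost_pow_apply hq₁ hq₂, map_add, map_smul, LinearMap.smul_apply,
        smul_eq_mul, F.apply_e₁_e₁, hq₁]
      ring
    rw [this]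
    exact mul_pos (by positivity) (neg_pos.mpr F.apply_e₁_e₂_neg)

theorem rootReflection_coord_apply (hB : B.IsSymm) (x y x' y' : ℝ) :
    rootReflection B (x • F.e₁ + y • F.e₂ + q) (x' • F.e₁ + y' • F.e₂ + q) =
      let T := -((x * y' + y * x') * B F.e₁ F.e₂ + B q q)
      (x' + 2 * T * x) • F.e₁ + (y' + 2 * T * y) • F.e₂ + (1 + 2 * T) • q := by
  have happly : B (x • F.e₁ + y • F.e₂ + q) (x' • F.e₁ + y' • F.e₂ + q) =
      (x * y' + y * x') * B F.e₁ F.e₂ + B q q := by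
    simpa using F.apply_apply hq₁ hq₂ hB x y x' y' 1 1
  rw [rootReflection_apply, happly]
  module

theorem not_slender_of_pos (hB : B.IsSymm) (hρ : ∀ g x y, B (ρ g x) (ρ g y) = B x y) {x y : ℝ}
    (hz : IsRealizedRoot ρ B (x • F.e₁ + y • F.e₂ + q)) (hx : x ≠ 0) (hQ : 0 < B q q) :
    ¬Group.Slender G := by
  have hxy : 2 * x * y * B F.e₁ F.e₂ + B q q = 1 := by
    have := F.apply_apply hq₁ hq₂ hB x y x y 1 1
    rw [one_smul, hz.1] at this
    linarith
  obtain ⟨n, hn⟩ := exists_coord_mul_pos F.one_lt_scale F.apply_e₁_e₂_neg hQ hx hxy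
  have hz₁ := hz.map hρ (F.boost ^ n)
  rw [F.boost_pow_apply hq₁ hq₂] at hz₁
  have hz₂ := hz₁.map hρ F.swap
  rw [F.swap_apply hq₁ hq₂] at hz₂
  have hδ := hz₁.rootReflection hz₂ hρ
  rw [F.rootReflection_coord_apply hq₁ hq₂ hB] at hδ
  exact F.not_slender_of_mul_pos (by rw [map_smul, hq₁, smul_zero])
    (by rw [map_smul, hq₂, smul_zero]) hB hρ hδ hn

variable {F} in
omit hq₁ hq₂ in
/-- The hypothesis `hlt` says that the component of `z` orthogonal to the hyperbolic plane has
positive norm. -/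
theorem not_slender_of_isRealizedRoot (hB : B.IsSymm) (hρ : ∀ g x y, B (ρ g x) (ρ g y) = B x y)
    {z : V} (hz : IsRealizedRoot ρ B z) (hne : B F.e₁ z ≠ 0 ∨ B F.e₂ z ≠ 0)
    (hlt : B F.e₁ F.e₂ < 2 * (B F.e₁ z * B F.e₂ z)) : ¬Group.Slender G := by
  have hE_neg := F.apply_e₁_e₂_neg
  set E := B F.e₁ F.e₂ with hE
  set x := B F.e₂ z / E
  set y := B F.e₁ z / E
  set q := z - x • F.e₁ - y • F.e₂ with hq
  have hxE : x * E = B F.e₂ z := div_mul_cancel₀ _ hE_neg.ne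
  have hyE : y * E = B F.e₁ z := div_mul_cancel₀ _ hE_neg.ne
  have hq₁ : B F.e₁ q = 0 := by
    simp only [hq, map_sub, map_smul, smul_eq_mul, F.apply_e₁_e₁, ← hE, hyE]
    ring
  have hq₂ : B F.e₂ q = 0 := by
    simp only [hq, map_sub, map_smul, smul_eq_mul, F.apply_e₂_e₂, hB.eq F.e₂ F.e₁, ← hE, hxE]
    ring
  have hz_eq : z = x • F.e₁ + y • F.e₂ + q := by
    rw [hq]
    abel
  have hQ : 0 < B q q := by
    have hself := F.apply_apply hq₁ hq₂ hB x y x y 1 1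
    rw [one_smul, ← hz_eq, hz.1, ← hE] at hself
    have : E * B q q = E - 2 * (B F.e₁ z * B F.e₂ z) := by
      linear_combination -E * hself - 2 * x * E * hyE - 2 * B F.e₁ z * hxE
    exact pos_of_mul_neg_right (by linarith) hE_neg.le
  rw [hz_eq] at hz
  rcases hne with h | h
  · have hz' := hz.map hρ F.swap
    rw [F.swap_apply hq₁ hq₂] at hz'
    exact F.not_slender_of_pos hq₁ hq₂ hB hρ hz' (div_ne_zero h hE_neg.ne) hQ
  · exact F.not_slender_of_pos hq₁ hq₂ hB hρ hz (div_ne_zero h hE_neg.ne) hQ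

end HyperbolicFrame

theorem apply_eq_zero_of_apply_add_smul_eq_zero {α β q : V} {u v : ℝ} (huv : u ≠ v)
    (hu : B (α + u • β) q = 0) (hv : B (α + v • β) q = 0) : B α q = 0 ∧ B β q = 0 := by
  simp only [map_add, map_smul, LinearMap.add_apply, LinearMap.smul_apply, smul_eq_mul] at hu hv
  have hβq : B β q = 0 :=
    (mul_eq_zero_iff_left (sub_ne_zero.mpr huv)).mp
      (show (u - v) * B β q = 0 by linear_combination hu - hv)
  exact ⟨by simpa [hβq] using hu, hβq⟩

section TwoRoots

variable {α β : V} {u : ℝ} (hB : B.IsSymm) (hα : B α α = 1) (hβ : B β β = 1) (hu : u ≠ 0)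
  (hαβ : 2 * B α β = -(u + u⁻¹))
include hB hβ hαβ

theorem rootReflection_apply_isotropic : rootReflection B β (α + u • β) = α + u⁻¹ • β := by
  rw [rootReflection_apply, map_add, map_smul, hβ, hB.eq, mul_add, hαβ, smul_eq_mul]
  module

include hα hu

theorem apply_isotropic_self : B (α + u • β) (α + u • β) = 0 := by
  simp only [map_add, map_smul, LinearMap.add_apply, LinearMap.smul_apply, smul_eq_mul, hα, hβ,
    hB.eq β α]
  linear_combination u * hαβ - mul_inv_cancel₀ hu

theorem rootReflection_rootReflection_apply_isotropic :
    rootReflection B β (rootReflection B α (α + u • β)) = u ^ 2 • (α + u • β) := by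
  have hrα : rootReflection B α (α + u • β) = u ^ 2 • (α + u⁻¹ • β) := by
    rw [rootReflection_apply, map_add, map_smul, hα, smul_eq_mul, mul_add, mul_left_comm, hαβ]
    match_scalars
    · linear_combination mul_inv_cancel₀ hu
    · field_simp
  have hrβ := rootReflection_apply_isotropic (u := u⁻¹) hB hβ (by rw [hαβ, inv_inv, add_comm])
  rw [hrα, map_smul, hrβ, inv_inv]

end TwoRoots

/-- The frame of isotropic vectors `α + u β` and `α + u⁻¹ β` in the plane of two roots `α` and `β`.
The boost is the product of the two reflections. -/
noncomputable def HyperbolicFrame.ofRoots (hB : B.IsSymm) {α β : V} {s t : G} {u : ℝ}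
    (hα : B α α = 1) (hβ : B β β = 1) (hs : ρ s = rootReflection B α)
    (ht : ρ t = rootReflection B β) (hu : 1 < u) (hαβ : 2 * B α β = -(u + u⁻¹)) :
    HyperbolicFrame ρ B :=
  have hu₀ : u ≠ 0 := by positivity
  have hu_inv : u⁻¹ < 1 := inv_lt_one_of_one_lt₀ hu
  have hαβ_inv : 2 * B α β = -(u⁻¹ + u⁻¹⁻¹) := by rw [hαβ, inv_inv, add_comm]
  have horth := fun q => apply_eq_zero_of_apply_add_smul_eq_zero (B := B) (α := α) (β := β)
    (q := q) (hu_inv.trans hu).ne'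
  { e₁ := α + u • β
    e₂ := α + u⁻¹ • β
    scale := u ^ 2
    boost := t * s
    swap := t
    apply_e₁_e₁ := apply_isotropic_self hB hα hβ hu₀ hαβ
    apply_e₂_e₂ := apply_isotropic_self hB hα hβ (inv_ne_zero hu₀) hαβ_inv
    apply_e₁_e₂_neg := by
      have : B (α + u • β) (α + u⁻¹ • β) = -(u - u⁻¹) ^ 2 / 2 := by
        simp only [map_add, map_smul, LinearMap.add_apply, LinearMap.smul_apply, smul_eq_mul, hα,
          hβ, hB.eq β α]
        linear_combination (u⁻¹ / 2 + u / 2) * hαβ - mul_inv_cancel₀ hu₀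
      rw [this]
      nlinarith
    one_lt_scale := one_lt_pow₀ hu two_ne_zero
    boost_e₁ := by
      rw [map_mul, Module.End.mul_apply, hs, ht,
        rootReflection_rootReflection_apply_isotropic hB hα hβ hu₀ hαβ]
    boost_e₂ := by
      rw [map_mul, Module.End.mul_apply, hs, ht, ← inv_pow,
        rootReflection_rootReflection_apply_isotropic hB hα hβ (inv_ne_zero hu₀) hαβ_inv]
    boost_orthogonal := fun q h₁ h₂ => by
      simp [hs, ht, rootReflection_apply, (horth q h₁ h₂).1, (horth q h₁ h₂).2]
    swap_e₁ := by rw [ht, rootReflection_apply_isotropic hB hβ hαβ]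
    swap_e₂ := by
      rw [ht, rootReflection_apply_isotropic hB hβ hαβ_inv, inv_inv]
    swap_orthogonal := fun q h₁ h₂ => by
      simp [ht, rootReflection_apply, (horth q h₁ h₂).2] }

theorem exists_one_lt_add_inv_eq {c : ℝ} (hc : 2 < c) : ∃ u : ℝ, 1 < u ∧ u + u⁻¹ = c := by
  have hsq : 0 < (c / 2) ^ 2 - 1 := by nlinarith
  refine ⟨c / 2 + √((c / 2) ^ 2 - 1), by linarith [Real.sqrt_pos.mpr hsq], ?_⟩
  have hinv : (c / 2 + √((c / 2) ^ 2 - 1))⁻¹ = c / 2 - √((c / 2) ^ 2 - 1) := by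
    refine inv_eq_of_mul_eq_one_right ?_
    linear_combination -Real.sq_sqrt hsq.le
  rw [hinv]
  ring

theorem not_slender_of_hyperbolic_pair (hB : B.IsSymm)
    (hρ : ∀ g x y, B (ρ g x) (ρ g y) = B x y) {α β γ : V} (hα : IsRealizedRoot ρ B α)
    (hβ : IsRealizedRoot ρ B β) (hγ : IsRealizedRoot ρ B γ) (hαβ : B α β < -1)
    (hαγ : |B α γ| ≤ 1) (hne : B β γ - B α β * B α γ ≠ 0) : ¬Group.Slender G := by
  obtain ⟨u, hu, huc⟩ := exists_one_lt_add_inv_eq (c := -(2 * B α β)) (by linarith)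
  obtain ⟨hαα, s, -, hs⟩ := hα
  obtain ⟨hββ, t, -, ht⟩ := hβ
  have huu : u * u⁻¹ = 1 := mul_inv_cancel₀ (by positivity)
  have happly : ∀ r : ℝ, B (α + r • β) γ = B α γ + r * B β γ := fun r => by simp
  let F : HyperbolicFrame ρ B := .ofRoots hB hαα hββ hs ht hu (by linarith)
  refine HyperbolicFrame.not_slender_of_isRealizedRoot (F := F) hB hρ hγ ?_ ?_
  · change B (α + u • β) γ ≠ 0 ∨ B (α + u⁻¹ • β) γ ≠ 0
    by_contra! h
    rw [happly, happly] at h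
    have hβγ : B β γ = 0 := by
      have : (u - u⁻¹) * B β γ = 0 := by linear_combination h.1 - h.2
      exact (mul_eq_zero_iff_left (sub_ne_zero.mpr (inv_lt_one_of_one_lt₀ hu |>.trans hu).ne')).mp
        this
    have hαγ : B α γ = 0 := by simpa [hβγ] using h.1
    exact hne (by rw [hβγ, hαγ, mul_zero, sub_zero])
  · change B (α + u • β) (α + u⁻¹ • β) < 2 * (B (α + u • β) γ * B (α + u⁻¹ • β) γ)
    have hE : B (α + u • β) (α + u⁻¹ • β) = 2 - 2 * B α β ^ 2 := by
      simp only [map_add, map_smul, LinearMap.add_apply, LinearMap.smul_apply, smul_eq_mul, hαα,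
        hββ, hB.eq β α]
      linear_combination B α β * huc + huu
    have hpr : B (α + u • β) γ * B (α + u⁻¹ • β) γ =
        (B β γ - B α β * B α γ) ^ 2 + (1 - B α β ^ 2) * B α γ ^ 2 := by
      rw [happly, happly]
      linear_combination (B α γ * B β γ) * huc + B β γ ^ 2 * huu
    have hsq : 0 < (B β γ - B α β * B α γ) ^ 2 := by positivity
    have hαγ_sq : B α γ ^ 2 ≤ 1 := (sq_le_one_iff_abs_le_one _).mpr hαγ
    have hαβ_sq : 1 < B α β ^ 2 := by nlinarith
    rw [hE, hpr]
    nlinarith [mul_nonneg (sub_nonneg.mpr hαβ_sq.le) (sub_nonneg.mpr hαγ_sq)]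

end HyperbolicPlane

section PerronFrobenius

open Matrix

variable {ι : Type*} [Fintype ι] {A : Matrix ι ι ℝ}

theorem exists_eigenvector_posSemidef_sub [DecidableEq ι] [Nonempty ι] (hA : A.IsHermitian) :
    ∃ (m : ℝ) (x : ι → ℝ), x ≠ 0 ∧ A *ᵥ x = m • x ∧ (A - m • 1).PosSemidef := by
  obtain ⟨k, hk⟩ := Finite.exists_min hA.eigenvalues
  refine ⟨hA.eigenvalues k, hA.eigenvectorBasis k,
    (WithLp.ofLp_eq_zero 2).ne.mpr (hA.eigenvectorBasis.orthonormal.ne_zero k),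
    hA.mulVec_eigenvectorBasis k, ?_⟩
  rw [← Algebra.algebraMap_eq_smul_one, posSemidef_iff_isHermitian_and_spectrum_nonneg]
  refine ⟨hA.sub ?_, ?_⟩
  · rw [Algebra.algebraMap_eq_smul_one]
    exact isHermitian_one.smul (IsSelfAdjoint.all _)
  · rw [← spectrum.sub_singleton_eq, hA.spectrum_real_eq_range_eigenvalues]
    rintro _ ⟨_, ⟨j, rfl⟩, _, rfl, rfl⟩
    exact sub_nonneg.mpr (hk j)

theorem abs_dotProduct_mulVec_abs_le (hle : ∀ i j, i ≠ j → A i j ≤ 0) (x : ι → ℝ) :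
    |x| ⬝ᵥ A *ᵥ |x| ≤ x ⬝ᵥ A *ᵥ x := by
  simp only [dotProduct, mulVec, Finset.mul_sum]
  refine Finset.sum_le_sum fun i _ => Finset.sum_le_sum fun j _ => ?_
  simp only [Pi.abs_apply, mul_left_comm _ (A i j), ← abs_mul]
  rcases eq_or_ne i j with rfl | hij
  · rw [abs_mul_self]
  · exact mul_le_mul_of_nonpos_left (le_abs_self _) (hle i j hij)

theorem pos_of_mulVec_eq_smul {G : SimpleGraph ι} (hG : G.Connected)
    (hle : ∀ i j, i ≠ j → A i j ≤ 0) (hlt : ∀ i j, G.Adj i j → A i j < 0) {m : ℝ} {v : ι → ℝ}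
    (hv : ∀ i, 0 ≤ v i) (hv_ne : v ≠ 0) (hAv : A *ᵥ v = m • v) (i : ι) : 0 < v i := by
  refine (hv i).lt_of_ne' fun hi => ?_
  obtain ⟨j, hj⟩ := Function.ne_iff.mp hv_ne
  obtain ⟨p⟩ := hG.preconnected i j
  obtain ⟨d, -, hd₁, hd₂⟩ := p.exists_boundary_dart {k | v k = 0} hi hj
  have hterm : ∀ k ∈ Finset.univ, A d.fst k * v k ≤ 0 := fun k _ => by
    rcases eq_or_ne d.fst k with rfl | hk
    · rw [show v d.fst = 0 from hd₁, mul_zero]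
    · exact mul_nonpos_of_nonpos_of_nonneg (hle _ _ hk) (hv k)
  have hsum : ∑ k, A d.fst k * v k = 0 := by
    change (A *ᵥ v) d.fst = 0
    rw [hAv, Pi.smul_apply, show v d.fst = 0 from hd₁, smul_zero]
  have hzero := (Finset.sum_eq_zero_iff_of_nonpos hterm).mp hsum d.snd (Finset.mem_univ _)
  exact hd₂ ((mul_eq_zero_iff_left (hlt _ _ d.adj).ne).mp hzero)

theorem exists_pos_eigenvector [DecidableEq ι] {G : SimpleGraph ι} (hG : G.Connected)
    (hA : A.IsHermitian) (hle : ∀ i j, i ≠ j → A i j ≤ 0) (hlt : ∀ i j, G.Adj i j → A i j < 0) :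
    ∃ (m : ℝ) (v : ι → ℝ), (∀ i, 0 < v i) ∧ A *ᵥ v = m • v ∧ (A - m • 1).PosSemidef := by
  have := hG.nonempty
  obtain ⟨m, x, hx, hAx, hpsd⟩ := exists_eigenvector_posSemidef_sub hA
  have hle' : ∀ i j, i ≠ j → (A - m • 1) i j ≤ 0 := fun i j hij => by
    simpa [one_apply_ne hij] using hle i j hij
  have hx_zero : x ⬝ᵥ (A - m • 1) *ᵥ x = 0 := by
    rw [sub_mulVec, hAx, smul_mulVec, one_mulVec, sub_self, dotProduct_zero]
  have habs_zero : |x| ⬝ᵥ (A - m • 1) *ᵥ |x| = 0 :=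
    le_antisymm (hx_zero ▸ abs_dotProduct_mulVec_abs_le hle' x)
      (hpsd.dotProduct_mulVec_nonneg |x|)
  have hA_abs : A *ᵥ |x| = m • |x| := by
    have := (hpsd.dotProduct_mulVec_zero_iff |x|).mp habs_zero
    rwa [sub_mulVec, smul_mulVec, one_mulVec, sub_eq_zero] at this
  exact ⟨m, |x|, pos_of_mulVec_eq_smul hG hle hlt (fun i => abs_nonneg (x i))
    (fun h => hx (funext fun i => abs_eq_zero.mp (congrFun h i))) hA_abs, hA_abs, hpsd⟩

end PerronFrobenius

section CosineMatrix

open Matrix Real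

variable {ι : Type*}

/-- The Coxeter diagram: vertices are joined when the generators do not commute. -/
def coxeterDiagram (M : CoxeterMatrix ι) : SimpleGraph ι where
  Adj i j := i ≠ j ∧ M i j ≠ 2
  symm := ⟨fun i j h => ⟨h.1.symm, M.symmetric i j ▸ h.2⟩⟩
  loopless := ⟨fun _ h => h.1 rfl⟩

/-- The Gram matrix of the geometric representation. The label `M i j = 0`, which stands for `∞`,
gets the value `-cos (π / 0) = -1`. -/
noncomputable def cosineMatrix (M : CoxeterMatrix ι) : Matrix ι ι ℝ :=
  .of fun i j => -cos (π / M i j)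

variable (M : CoxeterMatrix ι)

theorem cosineMatrix_apply (i j : ι) : cosineMatrix M i j = -cos (π / M i j) := rfl

theorem cosineMatrix_comm (i j : ι) : cosineMatrix M i j = cosineMatrix M j i := by
  rw [cosineMatrix_apply, M.symmetric, cosineMatrix_apply]

theorem isHermitian_cosineMatrix : (cosineMatrix M).IsHermitian :=
  .ext fun i j => cosineMatrix_comm M j i

theorem abs_cosineMatrix_apply_le (i j : ι) : |cosineMatrix M i j| ≤ 1 := by
  rw [cosineMatrix_apply, abs_neg]
  exact abs_cos_le_one _

theorem cosineMatrix_apply_neg {i j : ι} (h : (coxeterDiagram M).Adj i j) :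
    cosineMatrix M i j < 0 := by
  obtain ⟨hij, h2⟩ := h
  have h1 := M.off_diagonal i j hij
  rw [cosineMatrix_apply, neg_lt_zero]
  rcases Nat.eq_zero_or_pos (M i j) with h0 | h0
  · simp [h0]
  · have h3 : (3 : ℝ) ≤ M i j := by exact_mod_cast (show 3 ≤ M i j by lia)
    refine cos_pos_of_mem_Ioo ⟨(neg_neg_of_pos (by positivity)).trans (by positivity), ?_⟩
    exact div_lt_div_of_pos_left pi_pos two_pos (by linarith)

theorem cosineMatrix_apply_nonpos {i j : ι} (h : i ≠ j) : cosineMatrix M i j ≤ 0 := by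
  by_cases h2 : M i j = 2
  · simp [cosineMatrix_apply, h2]
  · exact (cosineMatrix_apply_neg M ⟨h, h2⟩).le

end CosineMatrix

section IndefiniteForm

open Matrix Set

variable {ι W V : Type*} [Group W] {M : CoxeterMatrix ι} (cs : CoxeterSystem M W)

/-- A point of the closed orbit of `v` at which `B v` is minimal cannot be moved further down by a
simple reflection. -/
theorem IsRootBasis.exists_mem_closure_orbit_apply_nonneg [NormedAddCommGroup V] [NormedSpace ℝ V]
    [FiniteDimensional ℝ V] {B : LinearMap.BilinForm ℝ V} {a : ι → V} (h : IsRootBasis M B a)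
    {v : V} (hv : ∀ i, B (a i) v < 0) (hbdd : Bornology.IsBounded (range (h.geomRep cs · v))) :
    ∃ x ∈ closure (range (h.geomRep cs · v)), ∀ i, 0 ≤ B (a i) x := by
  have := FiniteDimensional.proper ℝ V
  obtain ⟨x, hx, hmin⟩ := hbdd.isCompact_closure.exists_isMinOn (range_nonempty _).closure
    (B v).continuous_of_finiteDimensional.continuousOn
  refine ⟨x, hx, fun i => ?_⟩
  have hmaps : MapsTo (rootReflection B (a i)) (range (h.geomRep cs · v))
      (range (h.geomRep cs · v)) := by
    rintro _ ⟨w, rfl⟩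
    exact ⟨cs.simple i * w, by simp only [map_mul, Module.End.mul_apply, h.geomRep_simple cs]⟩
  have hle := hmin (hmaps.closure (LinearMap.continuous_of_finiteDimensional _) hx)
  simp only [mem_ofPred_eq, rootReflection_apply, map_sub, map_smul, smul_eq_mul,
    h.symm.eq v (a i)] at hle
  nlinarith [hv i]

variable [DecidableEq ι]

theorem nonneg_of_mem_hull_range_single {x : ι → ℝ}
    (hx : x ∈ PointedCone.hull ℝ (range fun i => (Pi.single i 1 : ι → ℝ))) : 0 ≤ x := by
  induction hx using Submodule.span_induction with
  | mem x hx =>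
    obtain ⟨i, rfl⟩ := hx
    exact Pi.single_nonneg.mpr zero_le_one
  | zero => exact le_rfl
  | add x y _ _ hx hy => exact add_nonneg hx hy
  | smul c x _ hx => exact smul_nonneg c.2 hx

variable [Fintype ι] {B : LinearMap.BilinForm ℝ (ι → ℝ)}

theorem apply_eq_sum_mul_apply_single (x y : ι → ℝ) :
    B x y = ∑ i, x i * B (Pi.single i 1) y := by
  conv_lhs => rw [pi_eq_sum_univ' x]
  simp only [map_sum, map_smul, LinearMap.sum_apply, LinearMap.smul_apply, smul_eq_mul]

theorem neg_apply_le_sq_sum {f : Module.End ℝ (ι → ℝ)} {v : ι → ℝ} (hv : 0 ≤ v)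
    (hf : ∀ i j, |B (Pi.single i 1) (f (Pi.single j 1))| ≤ 1) : -B v (f v) ≤ (∑ i, v i) ^ 2 := by
  have hfv : ∀ i, B (Pi.single i 1) (f v) = ∑ j, v j * B (Pi.single i 1) (f (Pi.single j 1)) := by
    intro i
    conv_lhs => rw [pi_eq_sum_univ' v]
    simp only [map_sum, map_smul, smul_eq_mul]
  rw [apply_eq_sum_mul_apply_single, sq, Finset.sum_mul, ← Finset.sum_neg_distrib]
  refine Finset.sum_le_sum fun i _ => ?_
  rw [hfv, ← mul_neg, ← Finset.sum_neg_distrib]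
  refine mul_le_mul_of_nonneg_left (Finset.sum_le_sum fun j _ => ?_) (hv i)
  rw [← mul_neg]
  exact mul_le_of_le_one_right (hv j) (by linarith [(abs_le.mp (hf i j)).1])

theorem apply_eq_mul_sum {v : ι → ℝ} {m : ℝ} (hB : B.IsSymm)
    (hBv : ∀ i, B (Pi.single i 1) v = m * v i) (x : ι → ℝ) : B v x = m * ∑ i, x i * v i := by
  rw [hB.eq, apply_eq_sum_mul_apply_single, Finset.mul_sum]
  exact Finset.sum_congr rfl fun i _ => by rw [hBv, mul_left_comm]

omit [Fintype ι] in
theorem isBounded_range_of_abs_apply_le [Finite ι] {κ : Type*}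
    {f : κ → Module.End ℝ (ι → ℝ)} {v : ι → ℝ} {m : ℝ} (hB : B.IsSymm) (hm : m < 0)
    (hv : ∀ i, 0 < v i) (hBv : ∀ i, B (Pi.single i 1) v = m * v i) (hfv : ∀ k, 0 ≤ f k v)
    (hf : ∀ k i j, |B (Pi.single i 1) (f k (Pi.single j 1))| ≤ 1) :
    Bornology.IsBounded (range (f · v)) := by
  have := Fintype.ofFinite ι
  refine (Metric.isBounded_Icc 0 fun i => (∑ i, v i) ^ 2 / (-m * v i)).subset ?_
  rintro _ ⟨k, rfl⟩
  refine ⟨hfv k, fun i => ?_⟩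
  rw [le_div_iff₀ (mul_pos (neg_pos.mpr hm) (hv i))]
  have hsingle : f k v i * v i ≤ ∑ i, f k v i * v i :=
    Finset.single_le_sum (f := fun i => f k v i * v i)
      (fun i _ => mul_nonneg (hfv k i) (hv i).le) (Finset.mem_univ i)
  calc f k v i * (-m * v i) = -m * (f k v i * v i) := by ring
    _ ≤ -m * ∑ i, f k v i * v i := mul_le_mul_of_nonneg_left hsingle (by linarith)
    _ = -B v (f k v) := by rw [apply_eq_mul_sum hB hBv, neg_mul]
    _ ≤ _ := neg_apply_le_sq_sum (fun i => (hv i).le) (hf k)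

omit [Fintype ι] in
theorem IsRootBasis.exists_one_lt_abs_apply [Finite ι] [Nonempty ι]
    (h : IsRootBasis M B fun i => Pi.single i 1) {v : ι → ℝ} {m : ℝ} (hm : m < 0)
    (hv : ∀ i, 0 < v i) (hBv : ∀ i, B (Pi.single i 1) v = m * v i) :
    ∃ i w j, 1 < |B (Pi.single i 1) (h.geomRep cs w (Pi.single j 1))| := by
  have := Fintype.ofFinite ι
  by_contra! hle
  have hBv_neg : ∀ i, B (Pi.single i 1) v < 0 := fun i => by
    rw [hBv]
    exact mul_neg_of_neg_of_pos hm (hv i)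
  have hvw : ∀ w, v ≤ h.geomRep cs w v := fun w => sub_nonneg.mp
    (nonneg_of_mem_hull_range_single (h.geomRep_sub_mem_hull cs (fun i => (hBv_neg i).le) w))
  have hbdd : Bornology.IsBounded (range (h.geomRep cs · v)) :=
    isBounded_range_of_abs_apply_le h.symm hm hv hBv
      (fun w i => (hv i).le.trans (hvw w i)) fun w i j => hle i w j
  obtain ⟨x, hx, hx_nonneg⟩ := h.exists_mem_closure_orbit_apply_nonneg cs hBv_neg hbdd
  have hvx : v ≤ x := closure_minimal (range_subset_iff.mpr hvw) isClosed_Ici hx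
  have hBvx_nonneg : 0 ≤ B v x := by
    rw [apply_eq_sum_mul_apply_single]
    exact Finset.sum_nonneg fun i _ => mul_nonneg (hv i).le (hx_nonneg i)
  have hxv : 0 < ∑ i, x i * v i := Finset.sum_pos
    (fun i _ => mul_pos ((hv i).trans_le (hvx i)) (hv i)) Finset.univ_nonempty
  rw [apply_eq_mul_sum h.symm hBv] at hBvx_nonneg
  exact (mul_neg_of_neg_of_pos hm hxv).not_ge hBvx_nonneg

theorem isRootBasis_toBilin'_cosineMatrix (M : CoxeterMatrix ι) :
    IsRootBasis M (cosineMatrix M).toBilin' fun i => Pi.single i 1 where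
  symm := ⟨fun x y => by
    simp only [toBilin'_apply']
    rw [dotProduct_mulVec, ← mulVec_transpose, ← conjTranspose_eq_transpose_of_trivial,
      (isHermitian_cosineMatrix M).eq, dotProduct_comm]⟩
  apply_eq i j _ := by rw [toBilin'_single, cosineMatrix_apply]
  apply_le i j h := by simp [cosineMatrix_apply, h]

include cs in
omit [DecidableEq ι] in
theorem not_slender_of_mulVec_cosineMatrix_eq_smul [Nonempty ι] {v : ι → ℝ} {m : ℝ} (hm : m < 0)
    (hv : ∀ i, 0 < v i) (hMv : cosineMatrix M *ᵥ v = m • v) : ¬Group.Slender W := by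
  classical
  have h := isRootBasis_toBilin'_cosineMatrix M
  set B := (cosineMatrix M).toBilin'
  have hBρ := h.apply_geomRep_geomRep cs
  have hsimple : ∀ i, IsRealizedRoot (h.geomRep cs) B (Pi.single i 1) := fun i =>
    ⟨h.apply_self i, cs.simple i, cs.simple_mul_simple_self i, h.geomRep_simple cs i⟩
  have hBv : ∀ i, B (Pi.single i 1) v = m * v i := fun i => by
    rw [toBilin'_apply', single_one_dotProduct, hMv, Pi.smul_apply, smul_eq_mul]
  obtain ⟨i, β, hβ, hiβ⟩ : ∃ i β, IsRealizedRoot (h.geomRep cs) B β ∧ B (Pi.single i 1) β < -1 := by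
    obtain ⟨i, w, j, hij⟩ := h.exists_one_lt_abs_apply cs hm hv hBv
    have hβ := (hsimple j).map hBρ w
    rcases lt_abs.mp hij with hlt | hlt
    · refine ⟨i, _, (hsimple i).rootReflection hβ hBρ, ?_⟩
      rw [rootReflection_apply, map_sub, map_smul, h.apply_self, smul_eq_mul]
      linarith
    · exact ⟨i, _, hβ, by linarith⟩
  obtain ⟨k, hk⟩ : ∃ k,
      B β (Pi.single k 1) - B (Pi.single i 1) β * B (Pi.single i 1) (Pi.single k 1) ≠ 0 := by
    by_contra! horth
    have hzero : B β (β - B (Pi.single i 1) β • Pi.single i 1) = 0 := by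
      rw [apply_eq_sum_mul_apply_single]
      refine Finset.sum_eq_zero fun k _ => mul_eq_zero_of_right _ ?_
      rw [map_sub, map_smul, smul_eq_mul, h.symm.eq _ β, h.symm.eq _ (Pi.single i 1), horth]
    rw [map_sub, map_smul, hβ.1, smul_eq_mul, h.symm.eq β] at hzero
    nlinarith
  refine not_slender_of_hyperbolic_pair h.symm hBρ (hsimple i) hβ (hsimple k) hiβ ?_ hk
  rw [toBilin'_single]
  exact abs_cosineMatrix_apply_le M i k

end IndefiniteForm

section HyperplaneReflection

open scoped RealInnerProductSpace

variable {E : Type*} [NormedAddCommGroup E] [InnerProductSpace ℝ E]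

theorem reflection_orthogonal_span_singleton_apply {n : E} (hn : ‖n‖ = 1) (x : E) :
    (ℝ ∙ n)ᗮ.reflection x = x - (2 * ⟪n, x⟫) • n := by
  rw [Submodule.reflection_orthogonal_apply, Submodule.reflection_singleton_apply, hn,
    RCLike.ofReal_real_eq_id, id, one_pow, div_one, ← Nat.cast_smul_eq_nsmul ℝ, smul_smul,
    Nat.cast_ofNat, neg_sub]

/-- The reflection in the affine hyperplane `⟪n, x⟫ = -c`, provided that `n` is a unit vector. -/
noncomputable def hyperplaneReflection (n : E) (c : ℝ) : E ≃ᵢ E :=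
  (ℝ ∙ n)ᗮ.reflection.toIsometryEquiv.trans (IsometryEquiv.addRight (-(2 * c) • n))

theorem hyperplaneReflection_sub_hyperplaneReflection (n : E) (c : ℝ) (x y : E) :
    hyperplaneReflection n c x - hyperplaneReflection n c y = (ℝ ∙ n)ᗮ.reflection (x - y) := by
  simp [hyperplaneReflection]

variable {n : E} (hn : ‖n‖ = 1) (c : ℝ)
include hn

theorem hyperplaneReflection_apply (x : E) :
    hyperplaneReflection n c x = x - (2 * (⟪n, x⟫ + c)) • n := by
  simp only [hyperplaneReflection, IsometryEquiv.trans_apply,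
    LinearIsometryEquiv.coe_toIsometryEquiv, IsometryEquiv.addRight_apply,
    reflection_orthogonal_span_singleton_apply hn]
  module

theorem hyperplaneReflection_mul_self :
    hyperplaneReflection n c * hyperplaneReflection n c = 1 := by
  ext x
  simp only [IsometryEquiv.mul_apply, hyperplaneReflection_apply hn, inner_sub_right,
    real_inner_smul_right, real_inner_self_eq_norm_sq, hn, IsometryEquiv.coe_one, id]
  module

theorem hyperplaneReflection_eq_self_iff {x : E} :
    hyperplaneReflection n c x = x ↔ ⟪n, x⟫ = -c := by
  have hn₀ : n ≠ 0 := norm_ne_zero_iff.mp (by simp [hn])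
  rw [hyperplaneReflection_apply hn, sub_eq_self, smul_eq_zero_iff_left hn₀,
    mul_eq_zero_iff_left two_ne_zero, eq_neg_iff_add_eq_zero]

theorem dist_hyperplaneReflection_sq (x p : E) :
    dist (hyperplaneReflection n c x) p ^ 2 =
      dist x p ^ 2 + 4 * ((⟪n, x⟫ + c) * (⟪n, p⟫ + c)) := by
  rw [hyperplaneReflection_apply hn, dist_eq_norm, dist_eq_norm, sub_right_comm, norm_sub_sq_real,
    real_inner_smul_right, norm_smul, hn, mul_one, Real.norm_eq_abs, sq_abs,
    real_inner_comm n (x - p), inner_sub_right]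
  ring

end HyperplaneReflection

section AffineReflection

open scoped RealInnerProductSpace

variable {d : ℕ} {n : EuclideanSpace ℝ (Fin d)}

theorem isAffineReflection_hyperplaneReflection (hn : ‖n‖ = 1) (c : ℝ) :
    IsAffineReflection (hyperplaneReflection n c) := by
  have hn₀ : n ≠ 0 := norm_ne_zero_iff.mp (by simp [hn])
  refine ⟨hyperplaneReflection_mul_self hn c, fun h => ?_,
    AffineSubspace.mk' (-c • n) (ℝ ∙ n)ᗮ, ?_, ?_⟩
  · have := (hyperplaneReflection_eq_self_iff hn c (x := (1 - c) • n)).mp (by rw [h]; rfl)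
    rw [real_inner_smul_right, real_inner_self_eq_norm_sq, hn] at this
    linarith
  · ext x
    rw [SetLike.mem_coe, AffineSubspace.mem_mk', Submodule.mem_orthogonal_singleton_iff_inner_right,
      vsub_eq_sub, inner_sub_right, real_inner_smul_right, real_inner_self_eq_norm_sq, hn,
      sub_eq_zero, one_pow, mul_one]
    exact (hyperplaneReflection_eq_self_iff hn c).symm
  · rw [AffineSubspace.direction_mk', add_comm, ← finrank_span_singleton (K := ℝ) hn₀,
      Submodule.finrank_add_finrank_orthogonal, finrank_euclideanSpace_fin]

end AffineReflection

section AffineAction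

open Set
open scoped RealInnerProductSpace

variable {E : Type*} [NormedAddCommGroup E] [InnerProductSpace ℝ E]

variable (E) in
/-- The degenerate inner product on the space `E × ℝ` of affine functions `x ↦ ⟪n, x⟫ + c`. -/
noncomputable def affineForm : LinearMap.BilinForm ℝ (E × ℝ) :=
  (innerₗ E).compl₁₂ (LinearMap.fst ℝ E ℝ) (LinearMap.fst ℝ E ℝ)

theorem affineForm_apply (f g : E × ℝ) : affineForm E f g = ⟪f.1, g.1⟫ := rfl

/-- Evaluation at `x` of the affine functions `x ↦ ⟪n, x⟫ + c`, encoded as pairs `(n, c)`. -/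
noncomputable def affineEval (x : E) : Module.Dual ℝ (E × ℝ) :=
  (innerₗ E x).coprod LinearMap.id

theorem affineEval_apply (x : E) (f : E × ℝ) : affineEval x f = ⟪f.1, x⟫ + f.2 := by
  simp [affineEval, real_inner_comm]

theorem affineEval_injective : Function.Injective (affineEval : E → Module.Dual ℝ (E × ℝ)) := by
  intro x y h
  refine ext_inner_left ℝ fun n => ?_
  simpa [affineEval_apply] using LinearMap.congr_fun h (n, 0)

theorem affineEval_hyperplaneReflection {a : E × ℝ} (ha : ‖a.1‖ = 1) (x : E) (f : E × ℝ) :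
    affineEval (hyperplaneReflection a.1 a.2 x) f =
      affineEval x (rootReflection (affineForm E) a f) := by
  simp only [affineEval_apply, hyperplaneReflection_apply ha, rootReflection_apply,
    affineForm_apply, inner_sub_right, inner_sub_left, Prod.fst_sub, Prod.smul_fst, Prod.snd_sub,
    Prod.smul_snd, real_inner_smul_left, real_inner_smul_right, smul_eq_mul, real_inner_comm a.1]
  ring

variable {ι W : Type*} [Group W] {M : CoxeterMatrix ι} (cs : CoxeterSystem M W) {a : ι → E × ℝ}

namespace IsRootBasis

theorem norm_fst (h : IsRootBasis M (affineForm E) a) (i : ι) : ‖(a i).1‖ = 1 := by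
  have := h.apply_self i
  rwa [affineForm_apply, real_inner_self_eq_norm_sq,
    pow_eq_one_iff_of_nonneg (norm_nonneg _) two_ne_zero] at this

theorem isLiftable_hyperplaneReflection (h : IsRootBasis M (affineForm E) a) :
    M.IsLiftable fun i => hyperplaneReflection (a i).1 (a i).2 := by
  intro i j
  have hpow : ∀ (k : ℕ) (x : E) (f : E × ℝ),
      affineEval (((hyperplaneReflection (a i).1 (a i).2 *
          hyperplaneReflection (a j).1 (a j).2) ^ k) x) f =
        affineEval x (((rootReflection (affineForm E) (a j) *
          rootReflection (affineForm E) (a i)) ^ k) f) := by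
    intro k
    induction k with
    | zero => intro x f; rfl
    | succ k ih =>
      intro x f
      rw [pow_succ, pow_succ', IsometryEquiv.mul_apply, ih, IsometryEquiv.mul_apply,
        affineEval_hyperplaneReflection (h.norm_fst i),
        affineEval_hyperplaneReflection (h.norm_fst j)]
      rfl
  ext x
  refine affineEval_injective (LinearMap.ext fun f => ?_)
  rw [hpow, ← M.symmetric j i, h.isLiftable j i]
  rfl

/-- The action dual to the geometric representation on affine functions: the simple generators act
as reflections in the zero sets of the simple roots. -/
noncomputable def affineAction (h : IsRootBasis M (affineForm E) a) : W →* (E ≃ᵢ E) :=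
  cs.lift ⟨_, h.isLiftable_hyperplaneReflection⟩

theorem affineAction_simple (h : IsRootBasis M (affineForm E) a) (i : ι) :
    h.affineAction cs (cs.simple i) = hyperplaneReflection (a i).1 (a i).2 :=
  cs.lift_apply_simple h.isLiftable_hyperplaneReflection i

theorem affineEval_affineAction (h : IsRootBasis M (affineForm E) a) (w : W) (x : E) (f : E × ℝ) :
    affineEval (h.affineAction cs w x) f = affineEval x (h.geomRep cs w⁻¹ f) := by
  induction w using cs.simple_induction_left generalizing f with
  | one => simp
  | mul_simple_left w i ih =>
    rw [map_mul, IsometryEquiv.mul_apply, affineAction_simple,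
      affineEval_hyperplaneReflection (h.norm_fst i), ih, mul_inv_rev, map_mul,
      Module.End.mul_apply, cs.inv_simple, geomRep_simple]

theorem range_affineAction (h : IsRootBasis M (affineForm E) a) :
    (h.affineAction cs).range =
      Subgroup.closure (range fun i => hyperplaneReflection (a i).1 (a i).2) := by
  rw [MonoidHom.range_eq_map, ← cs.subgroup_closure_range_simple, MonoidHom.map_closure,
    ← range_comp]
  exact congrArg _ (congrArg _ (funext fun i => h.affineAction_simple cs i))

variable {p : E} (hp : ∀ i, 1 ≤ affineEval p (a i))
include hp

theorem one_le_dist_affineAction (h : IsRootBasis M (affineForm E) a) {w : W} (hw : w ≠ 1) :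
    1 ≤ dist (h.affineAction cs w p) p := by
  obtain ⟨i, hi⟩ := cs.exists_rightDescent_of_ne_one (inv_ne_one.mpr hw)
  have hneg : affineEval (h.affineAction cs w p) (a i) ≤ 0 := by
    have hhull : PointedCone.hull ℝ (range a) ≤
        (PointedCone.positive ℝ ℝ).comap (affineEval p) := by
      rw [PointedCone.hull, Submodule.span_le]
      rintro _ ⟨j, rfl⟩
      exact zero_le_one.trans (hp j)
    have := hhull (h.neg_geomRep_mem_hull cs hi)
    rw [affineEval_affineAction]
    simpa using this
  calc 1 ≤ affineEval p (a i) - affineEval (h.affineAction cs w p) (a i) := by linarith [hp i]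
    _ = ⟪(a i).1, p - h.affineAction cs w p⟫ := by
      rw [affineEval_apply, affineEval_apply, inner_sub_right, add_sub_add_right_eq_sub]
    _ ≤ ‖(a i).1‖ * ‖p - h.affineAction cs w p‖ := real_inner_le_norm _ _
    _ = dist (h.affineAction cs w p) p := by rw [h.norm_fst, one_mul, dist_comm, dist_eq_norm]

theorem pairwise_one_le_dist_affineAction (h : IsRootBasis M (affineForm E) a) :
    Pairwise fun w w' => 1 ≤ dist (h.affineAction cs w p) (h.affineAction cs w' p) := by
  intro w w' hne
  have := h.one_le_dist_affineAction cs hp (w := w'⁻¹ * w) fun h1 =>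
    hne (inv_mul_eq_one.mp h1).symm
  rwa [← (h.affineAction cs w').dist_eq, ← IsometryEquiv.mul_apply, ← map_mul,
    mul_inv_cancel_left] at this

theorem affineAction_injective (h : IsRootBasis M (affineForm E) a) :
    Function.Injective (h.affineAction cs) := by
  intro w w' heq
  by_contra hne
  have : (1 : ℝ) ≤ dist _ _ := h.pairwise_one_le_dist_affineAction cs hp hne
  rw [heq, dist_self] at this
  exact not_lt_of_ge this one_pos

theorem finite_setOf_affineAction_image_inter_nonempty [ProperSpace E]
    (h : IsRootBasis M (affineForm E) a) {K L : Set E} (hK : Bornology.IsBounded K)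
    (hL : Bornology.IsBounded L) : {w | (h.affineAction cs w '' K ∩ L).Nonempty}.Finite := by
  let : TopologicalSpace W := ⊥
  have : DiscreteTopology W := ⟨rfl⟩
  have hemb := Metric.isClosedEmbedding_of_pairwise_le_dist one_pos
    (h.pairwise_one_le_dist_affineAction cs hp)
  obtain ⟨R, hR⟩ := hK.subset_closedBall p
  obtain ⟨R', hR'⟩ := hL.subset_closedBall p
  refine (isCompact_iff_finite.mp
    (hemb.isCompact_preimage (isCompact_closedBall p (R + R')))).subset ?_
  rintro w ⟨_, ⟨x, hx, rfl⟩, hxL⟩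
  calc dist (h.affineAction cs w p) p
      ≤ dist (h.affineAction cs w p) (h.affineAction cs w x) + dist (h.affineAction cs w x) p :=
        dist_triangle _ _ _
    _ ≤ R + R' := by
      rw [IsometryEquiv.dist_eq, dist_comm]
      exact add_le_add (hR hx) (hR' hxL)

include cs in
theorem finite_of_forall_affineEval_eq_zero [ProperSpace E] (h : IsRootBasis M (affineForm E) a)
    {x : E} (hx : ∀ i, affineEval x (a i) = 0) : Finite W := by
  have hfix : ∀ w, h.affineAction cs w x = x := fun w => by
    induction w using cs.simple_induction_left with
    | one => simp
    | mul_simple_left w i ih =>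
      rw [map_mul, IsometryEquiv.mul_apply, ih, affineAction_simple,
        hyperplaneReflection_eq_self_iff (h.norm_fst i), ← add_eq_zero_iff_eq_neg,
        ← affineEval_apply, hx]
  refine finite_univ_iff.mp ((h.finite_setOf_affineAction_image_inter_nonempty cs hp
    (Bornology.isBounded_singleton (x := x)) (Bornology.isBounded_singleton (x := x))).subset
      fun w _ => ⟨x, ⟨x, rfl, hfix w⟩, rfl⟩)

theorem exists_affineAction_mem_alcove [ProperSpace E] (h : IsRootBasis M (affineForm E) a)
    (x : E) : ∃ w, ∀ i, 0 ≤ affineEval (h.affineAction cs w x) (a i) := by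
  have hfin : {w | dist (h.affineAction cs w x) p ≤ dist x p}.Finite :=
    (h.finite_setOf_affineAction_image_inter_nonempty cs hp (K := {x})
      Bornology.isBounded_singleton Metric.isBounded_closedBall).subset fun w hw =>
        ⟨_, ⟨x, rfl, rfl⟩, hw⟩
  obtain ⟨w, hw, hmin⟩ := exists_min_image _ (fun w => dist (h.affineAction cs w x) p) hfin
    ⟨1, by simp⟩
  refine ⟨w, fun i => ?_⟩
  have hle : dist (h.affineAction cs w x) p ≤ dist (h.affineAction cs (cs.simple i * w) x) p := by
    rcases le_total (dist (h.affineAction cs (cs.simple i * w) x) p) (dist x p) with hs | hs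
    · exact hmin _ hs
    · exact hw.trans hs
  rw [map_mul, IsometryEquiv.mul_apply, affineAction_simple] at hle
  have hsq := pow_le_pow_left₀ dist_nonneg hle 2
  rw [dist_hyperplaneReflection_sq (h.norm_fst i), ← affineEval_apply, ← affineEval_apply] at hsq
  exact nonneg_of_mul_nonneg_left (by linarith) (zero_lt_one.trans_le (hp i))

end IsRootBasis

end AffineAction

section GramRealization

open Matrix Set

variable {ι : Type*} [Finite ι]

theorem exists_span_eq_top_and_gram_eq {E : Type*} [NormedAddCommGroup E] [InnerProductSpace ℝ E]
    (b : ι → E) : ∃ (d : ℕ) (a : ι → EuclideanSpace ℝ (Fin d)),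
      Submodule.span ℝ (range a) = ⊤ ∧ gram ℝ a = gram ℝ b := by
  have := FiniteDimensional.span_of_finite ℝ (finite_range b)
  let b' : ι → Submodule.span ℝ (range b) := fun i => ⟨b i, Submodule.subset_span ⟨i, rfl⟩⟩
  have hb' : Submodule.span ℝ (range b') = ⊤ := by
    rw [← Submodule.span_span_coe_preimage (R := ℝ) (s := range b)]
    congr 1
    ext x
    simp [b', Subtype.ext_iff]
  let e := (stdOrthonormalBasis ℝ (Submodule.span ℝ (range b))).repr
  refine ⟨_, e ∘ b', ?_, ?_⟩
  · have := congrArg (Submodule.map e.toLinearEquiv.toLinearMap) hb'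
    rwa [Submodule.map_span, ← range_comp, Submodule.map_top, LinearEquiv.range] at this
  · ext i j
    exact e.inner_map_map (b' i) (b' j)

theorem exists_span_eq_top_and_gram_eq_of_posSemidef {A : Matrix ι ι ℝ} (hA : A.PosSemidef) :
    ∃ (d : ℕ) (a : ι → EuclideanSpace ℝ (Fin d)),
      Submodule.span ℝ (range a) = ⊤ ∧ gram ℝ a = A := by
  obtain ⟨k, C, rfl⟩ := posSemidef_iff_eq_sum_vecMulVec.mp hA
  obtain ⟨d, a, hspan, ha⟩ := exists_span_eq_top_and_gram_eq
    fun i => (WithLp.toLp 2 fun k => C k i : EuclideanSpace ℝ (Fin k))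
  refine ⟨d, a, hspan, ha.trans ?_⟩
  ext i j
  simp [gram_apply, PiLp.inner_apply, Matrix.sum_apply, vecMulVec_apply, mul_comm]

end GramRealization

section IrreducibleReflections

open Set
open scoped RealInnerProductSpace

variable {E : Type*} [NormedAddCommGroup E] [InnerProductSpace ℝ E] {U : Submodule ℝ E}

theorem mem_or_mem_orthogonal_of_reflection_mem {n : E} (hn : ‖n‖ = 1)
    (hU : ∀ u ∈ U, (ℝ ∙ n)ᗮ.reflection u ∈ U) : n ∈ U ∨ n ∈ Uᗮ := by
  refine or_iff_not_imp_right.mpr fun h => ?_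
  obtain ⟨u, hu, hnu⟩ : ∃ u ∈ U, ⟪n, u⟫ ≠ 0 := by
    by_contra! h₀
    exact h ((U.mem_orthogonal' n).mpr h₀)
  have := hU u hu
  rw [reflection_orthogonal_span_singleton_apply hn, U.sub_mem_iff_right hu] at this
  exact (U.smul_mem_iff (mul_ne_zero two_ne_zero hnu)).mp this

theorem eq_bot_or_eq_top_of_reflection_mem {ι : Type*} {a : ι → E} (ha : ∀ i, ‖a i‖ = 1)
    (hspan : Submodule.span ℝ (range a) = ⊤) {G : SimpleGraph ι} (hG : G.Preconnected)
    (hadj : ∀ i j, G.Adj i j → ⟪a i, a j⟫ ≠ 0)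
    (hU : ∀ i, ∀ u ∈ U, (ℝ ∙ a i)ᗮ.reflection u ∈ U) : U = ⊥ ∨ U = ⊤ := by
  have hdich := fun i => mem_or_mem_orthogonal_of_reflection_mem (ha i) (hU i)
  have htop : ∀ {S : Submodule ℝ E}, (∀ i, a i ∈ S) → S = ⊤ := fun {S} hS => by
    rwa [eq_top_iff, ← hspan, Submodule.span_le, range_subset_iff]
  by_cases hall : ∀ i, a i ∈ Uᗮ
  · exact .inl (U.orthogonal_eq_top_iff.mp (htop hall))
  · push Not at hall
    obtain ⟨i, hi⟩ := hall
    refine .inr (htop fun j => by_contra fun hj => ?_)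
    obtain ⟨p⟩ := hG i j
    obtain ⟨e, -, he₁, he₂⟩ :=
      p.exists_boundary_dart {k | a k ∈ U} ((hdich i).resolve_right hi) hj
    exact hadj _ _ e.adj (Submodule.inner_right_of_mem_orthogonal he₁ ((hdich _).resolve_left he₂))

end IrreducibleReflections

section CompactAlcove

open Set
open scoped RealInnerProductSpace

variable {E : Type*} [NormedAddCommGroup E] [InnerProductSpace ℝ E] [FiniteDimensional ℝ E]
  {ι : Type*} [Fintype ι] {a : ι → E × ℝ}

theorem isCompact_alcove (hspan : Submodule.span ℝ (range fun i => (a i).1) = ⊤) {v : ι → ℝ}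
    (hv : ∀ i, 0 < v i) (hva : ∑ i, v i • (a i).1 = 0) :
    IsCompact {x | ∀ i, 0 ≤ affineEval x (a i)} := by
  let T : E →ₗ[ℝ] ι → ℝ := LinearMap.pi fun i => innerₗ E (a i).1
  have hT : T.ker = ⊥ := LinearMap.ker_eq_bot'.mpr fun x hx =>
    (Submodule.mem_bot ℝ).mp <| by
      rw [← Submodule.top_orthogonal_eq_bot, ← hspan]
      refine (Submodule.mem_orthogonal' _ _).mpr fun y hy => ?_
      refine Submodule.span_induction ?_ (inner_zero_right x) ?_ ?_ hy
      · rintro _ ⟨i, rfl⟩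
        rw [real_inner_comm]
        exact congrFun hx i
      · intro y z _ _ hy hz
        rw [inner_add_right, hy, hz, add_zero]
      · intro c y _ hy
        rw [real_inner_smul_right, hy, mul_zero]
  have hsum : ∀ x, ∑ i, v i * affineEval x (a i) = ∑ i, v i * (a i).2 := fun x => by
    have : ∑ i, v i * ⟪(a i).1, x⟫ = 0 := by
      simp_rw [← real_inner_smul_left, ← sum_inner, hva, inner_zero_left]
    simp_rw [affineEval_apply, mul_add, Finset.sum_add_distrib, this, zero_add]
  refine ((LinearMap.isClosedEmbedding_of_injective hT).isCompact_preimage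
    (isCompact_univ_pi fun i => isCompact_Icc (a := -(a i).2)
      (b := (∑ i, v i * (a i).2) / v i - (a i).2))).of_isClosed_subset ?_ ?_
  · simp only [affineEval_apply, ofPred_forall]
    exact isClosed_iInter fun i => isClosed_le continuous_const (by fun_prop)
  · intro x hx i _
    have hi : 0 ≤ ⟪(a i).1, x⟫ + (a i).2 := by simpa only [affineEval_apply] using hx i
    have hle : ⟪(a i).1, x⟫ + (a i).2 ≤ (∑ i, v i * (a i).2) / v i := by
      rw [le_div_iff₀ (hv i), ← hsum x, ← affineEval_apply, mul_comm]
      exact Finset.single_le_sum (f := fun i => v i * affineEval x (a i))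
        (fun i _ => mul_nonneg (hv i).le (hx i)) (Finset.mem_univ i)
    exact ⟨neg_le_iff_add_nonneg.mpr hi, le_sub_iff_add_le.mpr hle⟩

end CompactAlcove

section PosSemidefCosineMatrix

open Matrix Real Set
open scoped RealInnerProductSpace

variable {ι W : Type*} [Group W] {M : CoxeterMatrix ι} (cs : CoxeterSystem M W)

theorem isRootBasis_affineForm {E : Type*} [NormedAddCommGroup E] [InnerProductSpace ℝ E]
    {a : ι → E} (ha : gram ℝ a = cosineMatrix M) (c : ι → ℝ) :
    IsRootBasis M (affineForm E) fun i => (a i, c i) where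
  symm := ⟨fun f g => real_inner_comm g.1 f.1⟩
  apply_eq i j _ := (congrFun₂ ha i j).trans (cosineMatrix_apply M i j)
  apply_le i j h := (congrFun₂ ha i j).trans_le (by simp [cosineMatrix_apply, h])

include cs in
theorem finite_of_posDef_cosineMatrix [Finite ι] (hM : (cosineMatrix M).PosDef) : Finite W := by
  classical
  have := Fintype.ofFinite ι
  obtain ⟨d, a, -, ha⟩ := exists_span_eq_top_and_gram_eq_of_posSemidef hM.posSemidef
  obtain ⟨y, hy⟩ := mulVec_surjective_iff_isUnit.mpr hM.isUnit fun _ => (-1 : ℝ)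
  refine (isRootBasis_affineForm ha 1).finite_of_forall_affineEval_eq_zero cs (p := 0)
    (x := ∑ j, y j • a j) (fun i => by simp [affineEval_apply]) fun i => ?_
  have hinner : ⟪a i, ∑ j, y j • a j⟫ = -1 := by
    rw [← congrFun hy i, ← ha, inner_sum]
    exact Finset.sum_congr rfl fun j _ => (real_inner_smul_right _ _ _).trans (mul_comm _ _)
  rw [affineEval_apply, hinner, Pi.one_apply, neg_add_cancel]

theorem sum_smul_eq_zero_of_gram_mulVec_eq_zero [Fintype ι] {E : Type*} [NormedAddCommGroup E]
    [InnerProductSpace ℝ E] {a : ι → E} {v : ι → ℝ} (h : gram ℝ a *ᵥ v = 0) :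
    ∑ i, v i • a i = 0 := by
  rw [← inner_self_eq_zero (𝕜 := ℝ), ← star_dotProduct_gram_mulVec, h, dotProduct_zero]

include cs in
theorem exists_mulEquiv_euclideanReflectionSubgroup [Fintype ι]
    (hconn : (coxeterDiagram M).Preconnected)
    (hpsd : (cosineMatrix M).PosSemidef) {v : ι → ℝ} (hv : ∀ i, 0 < v i)
    (hMv : cosineMatrix M *ᵥ v = 0) :
    ∃ (d : ℕ) (Γ : Subgroup (EuclideanSpace ℝ (Fin d) ≃ᵢ EuclideanSpace ℝ (Fin d))),
      IsIrreducibleEuclideanReflectionSubgroup Γ ∧ Nonempty (W ≃* Γ) := by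
  obtain ⟨d, a, hspan, ha⟩ := exists_span_eq_top_and_gram_eq_of_posSemidef hpsd
  have h := isRootBasis_affineForm ha 1
  have hp : ∀ i, 1 ≤ affineEval 0 (a i, (1 : ι → ℝ) i) := by simp [affineEval_apply]
  refine ⟨d, (h.affineAction cs).range, ?_,
    ⟨MonoidHom.ofInjective (h.affineAction_injective cs hp)⟩⟩
  constructor
  · refine le_antisymm ?_ ((Subgroup.closure_le _).mpr fun f hf => hf.1)
    rw [h.range_affineAction cs]
    refine Subgroup.closure_mono ?_
    rintro _ ⟨i, rfl⟩
    exact ⟨Subgroup.subset_closure ⟨i, rfl⟩,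
      isAffineReflection_hyperplaneReflection (h.norm_fst i) _⟩
  · intro K L hK hL
    refine ((h.finite_setOf_affineAction_image_inter_nonempty cs hp hK.isBounded
      hL.isBounded).image (h.affineAction cs)).subset ?_
    rintro _ ⟨⟨w, rfl⟩, hw⟩
    exact ⟨w, hw, rfl⟩
  · refine ⟨_, isCompact_alcove hspan hv (a := fun i => (a i, 1))
      (sum_smul_eq_zero_of_gram_mulVec_eq_zero (ha ▸ hMv)), fun x => ?_⟩
    obtain ⟨w, hw⟩ := h.exists_affineAction_mem_alcove cs hp x
    exact ⟨_, ⟨w, rfl⟩, hw⟩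
  · intro U hU
    refine eq_bot_or_eq_top_of_reflection_mem h.norm_fst hspan hconn (fun i j hij => ?_)
      fun i u hu => ?_
    · exact (congrFun₂ ha i j).trans_ne (cosineMatrix_apply_neg M hij).ne
    · have := hU _ ⟨cs.simple i, h.affineAction_simple cs i⟩ u 0 (by rwa [sub_zero])
      rwa [hyperplaneReflection_sub_hyperplaneReflection, sub_zero] at this

include cs in
theorem finite_or_exists_mulEquiv_of_slender [Finite ι] (hconn : (coxeterDiagram M).Connected)
    (hW : Group.Slender W) :
    Finite W ∨
      ∃ (d : ℕ) (Γ : Subgroup (EuclideanSpace ℝ (Fin d) ≃ᵢ EuclideanSpace ℝ (Fin d))),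
        IsIrreducibleEuclideanReflectionSubgroup Γ ∧ Nonempty (W ≃* Γ) := by
  classical
  have := Fintype.ofFinite ι
  have := hconn.nonempty
  obtain ⟨m, v, hv, hMv, hpsd⟩ := exists_pos_eigenvector hconn (isHermitian_cosineMatrix M)
    (fun i j => cosineMatrix_apply_nonpos M) fun i j => cosineMatrix_apply_neg M
  rcases lt_trichotomy m 0 with hm | rfl | hm
  · exact absurd hW (not_slender_of_mulVec_cosineMatrix_eq_smul cs hm hv hMv)
  · rw [zero_smul] at hMv
    rw [zero_smul, sub_zero] at hpsd
    exact .inr (exists_mulEquiv_euclideanReflectionSubgroup cs hconn.preconnected hpsd hv hMv)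
  · refine .inl (finite_of_posDef_cosineMatrix cs ?_)
    rw [← sub_add_cancel (cosineMatrix M) (m • 1)]
    exact PosDef.posSemidef_add hpsd (PosDef.one.smul hm)

end PosSemidefCosineMatrix

section SlenderExtensions

variable {G H : Type*} [Group G] [Group H]

theorem fg_map {K : Subgroup G} (hK : K.FG) (f : G →* H) : (K.map f).FG := by
  rw [← Group.fg_iff_subgroup_fg] at hK ⊢
  exact Group.fg_of_surjective (f.subgroupMap_surjective K)

theorem fg_of_fg_map_of_fg_inf_ker {K : Subgroup G} (f : G →* H) (hmap : (K.map f).FG)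
    (hker : (K ⊓ f.ker).FG) : K.FG := by
  classical
  obtain ⟨S, hS⟩ := hmap
  obtain ⟨T, hTK, rfl⟩ := Finset.subset_set_image_iff.mp
    (Subgroup.subset_closure.trans_eq (congrArg SetLike.coe hS))
  rw [Finset.coe_image, ← MonoidHom.map_closure] at hS
  have hTK' : Subgroup.closure (T : Set G) ≤ K := (Subgroup.closure_le K).mpr hTK
  suffices K = Subgroup.closure (T : Set G) ⊔ (K ⊓ f.ker) by
    rw [this]
    exact Subgroup.FG.sup ⟨T, rfl⟩ hker
  refine le_antisymm (fun x hx => ?_) (sup_le hTK' inf_le_left)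
  obtain ⟨t, ht, htx⟩ := hS.ge (Subgroup.mem_map_of_mem f hx)
  rw [← mul_inv_cancel_left t x]
  refine Subgroup.mul_mem_sup ht ⟨K.mul_mem (K.inv_mem (hTK' ht)) hx, ?_⟩
  simp [htx]

theorem slender_of_finite [Finite G] : Group.Slender G := fun K =>
  (Group.fg_iff_subgroup_fg K).mp inferInstance

theorem slender_of_slender_ker (f : G →* H) (hH : Group.Slender H) (hker : Group.Slender f.ker) :
    Group.Slender G := fun K => by
  refine fg_of_fg_map_of_fg_inf_ker f (hH _) ?_
  rw [← Subgroup.subgroupOf_map_subtype]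
  exact fg_map (hker _) _

theorem slender_of_injective (f : G →* H) (hf : Function.Injective f) (hH : Group.Slender H) :
    Group.Slender G := by
  refine slender_of_slender_ker f hH ?_
  rw [f.ker_eq_bot_iff.mpr hf]
  exact slender_of_finite

theorem slender_prod (hG : Group.Slender G) (hH : Group.Slender H) : Group.Slender (G × H) := by
  refine slender_of_slender_ker (MonoidHom.fst G H) hG (slender_of_injective
    ((MonoidHom.snd G H).comp (MonoidHom.fst G H).ker.subtype) (fun x y hxy => ?_) hH)
  exact Subtype.ext (Prod.ext (x.2.trans y.2.symm) hxy)

theorem slender_pi {k : ℕ} {A : Fin k → Type*} [∀ i, Group (A i)]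
    (hA : ∀ i, Group.Slender (A i)) : Group.Slender (∀ i, A i) := by
  induction k with
  | zero => exact slender_of_finite
  | succ k ih =>
    refine slender_of_injective ((Pi.evalMonoidHom A 0).prod
      (MonoidHom.pi fun i : Fin k => Pi.evalMonoidHom A i.succ)) (fun x y hxy => ?_)
      (slender_prod (hA 0) (ih fun i => hA i.succ))
    obtain ⟨h_zero, h_succ⟩ := Prod.ext_iff.mp hxy
    exact funext (Fin.cases h_zero (congrFun h_succ))

end SlenderExtensions

section DirectProducts

variable {V : Type*} {M : CoxeterMatrix V} {W G : Type*} [Group W] [Group G]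

theorem commute_simple_of_eq_two (cs : CoxeterSystem M W) {v w : V} (h : M v w = 2) :
    Commute (cs.simple v) (cs.simple w) := by
  have hvw := cs.simple_mul_simple_pow v w
  rw [h, pow_two] at hvw
  rw [commute_iff_eq]
  simpa using eq_inv_of_mul_eq_one_left hvw

theorem commute_of_forall_commute_simple (cs : CoxeterSystem M W) (f : W →* G) {g : G}
    (h : ∀ v, Commute (f (cs.simple v)) g) (w : W) : Commute (f w) g := by
  induction w using cs.simple_induction with
  | simple v => exact h v
  | one => simp
  | mul w w' hw hw' => simpa using hw.mul_left hw'

variable (M) in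
theorem restrict_apply (S : Set V) (v w : S) : M.restrict S v w = M v w := rfl

variable (M) in
/-- The homomorphism `C(Γ_S) → C(Γ_T)` induced by an inclusion `S ⊆ T` of vertex sets. -/
def restrictInclusion {S T : Set V} (h : S ⊆ T) : (M.restrict S).Group →* (M.restrict T).Group :=
  (M.restrict S).toCoxeterSystem.lift ⟨fun v => (M.restrict T).simple (Set.inclusion h v),
    fun v w => (M.restrict T).toCoxeterSystem.simple_mul_simple_pow (Set.inclusion h v)
      (Set.inclusion h w)⟩

@[simp]
theorem restrictInclusion_simple {S T : Set V} (h : S ⊆ T) (v : S) :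
    restrictInclusion M h ((M.restrict S).simple v) =
      (M.restrict T).simple (Set.inclusion h v) :=
  (M.restrict S).toCoxeterSystem.lift_apply_simple _ v

open Classical in
theorem isLiftable_ite_simple {S T : Set V} (h : ∀ v ∈ S, ∀ w ∈ T \ S, M v w = 2) :
    (M.restrict T).IsLiftable fun v : T =>
      if hv : (v : V) ∈ S then (M.restrict S).simple ⟨v, hv⟩ else 1 := by
  intro v w
  have hsq (v : S) : (M.restrict S).simple v ^ 2 = 1 :=
    (M.restrict S).toCoxeterSystem.simple_sq v
  beta_reduce
  rw [restrict_apply]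
  by_cases hv : (v : V) ∈ S <;> by_cases hw : (w : V) ∈ S
  · rw [dif_pos hv, dif_pos hw]
    exact (M.restrict S).toCoxeterSystem.simple_mul_simple_pow ⟨v, hv⟩ ⟨w, hw⟩
  · rw [dif_pos hv, dif_neg hw, mul_one, h v hv w ⟨w.2, hw⟩, hsq]
  · rw [dif_neg hv, dif_pos hw, one_mul, M.symmetric v w, h w hw v ⟨v.2, hv⟩, hsq]
  · rw [dif_neg hv, dif_neg hw, one_mul, one_pow]

/-- The homomorphism `C(Γ_T) → C(Γ_S)` that kills the generators outside `S`; it exists when these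
commute with the generators in `S`. -/
noncomputable def restrictRetraction {S T : Set V} (h : ∀ v ∈ S, ∀ w ∈ T \ S, M v w = 2) :
    (M.restrict T).Group →* (M.restrict S).Group :=
  (M.restrict T).toCoxeterSystem.lift ⟨_, isLiftable_ite_simple h⟩

theorem restrictRetraction_simple_of_mem {S T : Set V} (h : ∀ v ∈ S, ∀ w ∈ T \ S, M v w = 2)
    {v : T} (hv : (v : V) ∈ S) :
    restrictRetraction h ((M.restrict T).simple v) = (M.restrict S).simple ⟨v, hv⟩ :=
  ((M.restrict T).toCoxeterSystem.lift_apply_simple _ v).trans (dif_pos hv)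

theorem restrictRetraction_simple_of_notMem {S T : Set V} (h : ∀ v ∈ S, ∀ w ∈ T \ S, M v w = 2)
    {v : T} (hv : (v : V) ∉ S) : restrictRetraction h ((M.restrict T).simple v) = 1 :=
  ((M.restrict T).toCoxeterSystem.lift_apply_simple _ v).trans (dif_neg hv)

theorem commute_restrictInclusion {S S' T : Set V} (h : ∀ v ∈ S, ∀ w ∈ S', M v w = 2)
    (hS : S ⊆ T) (hS' : S' ⊆ T) (x : (M.restrict S).Group) (y : (M.restrict S').Group) :
    Commute (restrictInclusion M hS x) (restrictInclusion M hS' y) := by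
  refine commute_of_forall_commute_simple (M.restrict S).toCoxeterSystem _ (fun v => ?_) x
  refine (commute_of_forall_commute_simple (M.restrict S').toCoxeterSystem _ (fun w => ?_) y).symm
  simp only [CoxeterMatrix.toCoxeterSystem_simple, restrictInclusion_simple]
  refine (commute_simple_of_eq_two (M.restrict T).toCoxeterSystem ?_).symm
  rw [restrict_apply]
  exact h v v.2 w w.2

theorem nonempty_mulEquiv_pi_restrict {J : Type*} [Finite J] {S : J → Set V}
    (h : Pairwise fun i j => ∀ v ∈ S i, ∀ w ∈ S j, M v w = 2) :
    Nonempty ((M.restrict (⋃ j, S j)).Group ≃* ∀ j, (M.restrict (S j)).Group) := by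
  classical
  have := Fintype.ofFinite J
  have h_notMem {i j : J} (hij : i ≠ j) {v : V} (hv : v ∈ S i) : v ∉ S j := fun hv' => by
    simpa using h hij v hv v hv'
  have h_compl (j : J) : ∀ v ∈ S j, ∀ w ∈ (⋃ i, S i) \ S j, M v w = 2 := by
    rintro v hv w ⟨hw, hwj⟩
    obtain ⟨i, hi⟩ := Set.mem_iUnion.mp hw
    exact h (by rintro rfl; exact hwj hi) v hv w hi
  let F := MonoidHom.pi fun j => restrictRetraction (h_compl j)
  let ι j := restrictInclusion M (Set.subset_iUnion S j)
  have hF (j : J) : F.comp (ι j) = MonoidHom.mulSingle (fun j => (M.restrict (S j)).Group) j := by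
    refine (M.restrict (S j)).toCoxeterSystem.ext_simple fun v => funext fun i => ?_
    simp only [CoxeterMatrix.toCoxeterSystem_simple, MonoidHom.comp_apply, F, ι,
      restrictInclusion_simple, MonoidHom.pi_apply, MonoidHom.mulSingle_apply]
    rcases eq_or_ne i j with rfl | hij
    · rw [Pi.mulSingle_eq_same]
      exact restrictRetraction_simple_of_mem (h_compl i) v.2
    · rw [Pi.mulSingle_eq_of_ne hij]
      exact restrictRetraction_simple_of_notMem (h_compl i) (h_notMem hij.symm v.2)
  have hι : Pairwise fun i j => ∀ x y, Commute (ι i x) (ι j y) := fun i j hij x y =>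
    commute_restrictInclusion (h hij) _ _ x y
  refine ⟨F.toMulEquiv (MonoidHom.noncommPiCoprod ι hι) ?_ (MonoidHom.pi_ext fun j x => ?_)⟩
  · refine (M.restrict _).toCoxeterSystem.ext_simple fun ⟨v, hv⟩ => ?_
    obtain ⟨j, hj⟩ := Set.mem_iUnion.mp hv
    have hv_eq : (M.restrict (⋃ j, S j)).simple ⟨v, hv⟩ = ι j ((M.restrict (S j)).simple ⟨v, hj⟩) :=
      (restrictInclusion_simple (Set.subset_iUnion S j) ⟨v, hj⟩).symm
    rw [CoxeterMatrix.toCoxeterSystem_simple, hv_eq, MonoidHom.comp_apply, ← F.comp_apply, hF,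
      MonoidHom.mulSingle_apply, MonoidHom.noncommPiCoprod_mulSingle, MonoidHom.id_apply]
  · rw [MonoidHom.comp_apply, MonoidHom.noncommPiCoprod_mulSingle, ← F.comp_apply, hF,
      MonoidHom.mulSingle_apply, MonoidHom.id_apply]

/-- The decomposition of a product indexed by `Bool` into its two factors. -/
def piBoolMulEquiv (A : Bool → Type*) [∀ b, Group (A b)] : (∀ b, A b) ≃* A true × A false where
  toFun x := (x true, x false)
  invFun p := fun
    | true => p.1
    | false => p.2
  left_inv x := by ext b; cases b <;> rfl
  right_inv _ := rfl
  map_mul' _ _ := rfl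

theorem nonempty_mulEquiv_prod_restrict {S T : Set V} (hST : S ∪ T = Set.univ)
    (h : ∀ v ∈ S, ∀ w ∈ T, M v w = 2) :
    Nonempty (M.Group ≃* (M.restrict S).Group × (M.restrict T).Group) := by
  obtain ⟨e⟩ := nonempty_mulEquiv_pi_restrict (M := M) (S := fun b => cond b S T) <| by
    rintro (_ | _) (_ | _) hne v hv w hw
    · exact absurd rfl hne
    · exact (M.symmetric v w).trans (h w hw v hv)
    · exact h v hv w hw
    · exact absurd rfl hne
  rw [← Set.union_eq_iUnion, hST] at e
  exact ⟨(M.reindexGroupEquiv (Equiv.Set.univ V).symm).symm.trans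
    (e.trans (piBoolMulEquiv fun b => (M.restrict (cond b S T)).Group))⟩

end DirectProducts

section Components

variable {V : Type*} {M : CoxeterMatrix V}

theorem eq_two_of_mem_supp_of_ne {c c' : (coxeterDiagram M).ConnectedComponent} (hc : c ≠ c')
    {v w : V} (hv : v ∈ c.supp) (hw : w ∈ c'.supp) : M v w = 2 := by
  by_contra hvw
  have hne : v ≠ w := fun h => hc (SimpleGraph.ConnectedComponent.eq_of_common_vertex hv (h ▸ hw))
  exact hc (SimpleGraph.ConnectedComponent.eq_of_common_vertex
    (c.mem_supp_of_adj_mem_supp hv ⟨hne, hvw⟩) hw)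

variable (M) in
theorem coxeterDiagram_restrict (S : Set V) :
    coxeterDiagram (M.restrict S) = (coxeterDiagram M).induce S := by
  ext v w
  exact and_congr_left' Subtype.coe_injective.ne_iff.symm

theorem connected_coxeterDiagram_restrict_supp (c : (coxeterDiagram M).ConnectedComponent) :
    (coxeterDiagram (M.restrict c.supp)).Connected := by
  rw [coxeterDiagram_restrict]
  exact c.connected_toSimpleGraph

theorem slender_restrict_supp (hM : Group.Slender M.Group)
    (c : (coxeterDiagram M).ConnectedComponent) : Group.Slender (M.restrict c.supp).Group := by
  obtain ⟨e⟩ := nonempty_mulEquiv_prod_restrict (M := M) (Set.union_compl_self c.supp)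
    fun v hv w hw => eq_two_of_mem_supp_of_ne (Ne.symm hw) hv rfl
  exact slender_of_injective (e.symm.toMonoidHom.comp (MonoidHom.inl _ _))
    (e.symm.injective.comp (Prod.mk_left_injective 1)) hM

theorem exists_decomposition_of_slender [Finite V] (hM : Group.Slender M.Group) :
    ∃ S₁ S₂ : Set V,
      Nonempty (M.Group ≃* (M.restrict S₁).Group × (M.restrict S₂).Group) ∧
      Finite (M.restrict S₁).Group ∧
      ∃ (k : ℕ) (d : Fin k → ℕ)
        (W : ∀ i : Fin k,
          Subgroup (EuclideanSpace ℝ (Fin (d i)) ≃ᵢ EuclideanSpace ℝ (Fin (d i)))),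
        (∀ i, IsIrreducibleEuclideanReflectionSubgroup (W i)) ∧
        Nonempty ((M.restrict S₂).Group ≃* ∀ i, W i) := by
  have : Finite (coxeterDiagram M).ConnectedComponent := Quot.finite _
  let IsFin (c : (coxeterDiagram M).ConnectedComponent) := Finite (M.restrict c.supp).Group
  obtain ⟨k, ⟨e⟩⟩ := Finite.exists_equiv_fin {c // ¬IsFin c}
  refine ⟨⋃ c : {c // IsFin c}, c.1.supp, ⋃ i, (e.symm i).1.supp,
    nonempty_mulEquiv_prod_restrict ?_ ?_, ?_, k, ?_⟩
  · refine Set.eq_univ_of_forall fun v => ?_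
    let c := (coxeterDiagram M).connectedComponentMk v
    by_cases hc : IsFin c
    · exact .inl (Set.mem_iUnion.mpr ⟨⟨c, hc⟩, rfl⟩)
    · exact .inr (Set.mem_iUnion.mpr ⟨e ⟨c, hc⟩, by rw [e.symm_apply_apply]; rfl⟩)
  · intro v hv w hw
    obtain ⟨c, hc⟩ := Set.mem_iUnion.mp hv
    obtain ⟨i, hi⟩ := Set.mem_iUnion.mp hw
    exact eq_two_of_mem_supp_of_ne (by intro h; exact (e.symm i).2 (h ▸ c.2)) hc hi
  · obtain ⟨φ⟩ := nonempty_mulEquiv_pi_restrict (M := M) (S := fun c : {c // IsFin c} => c.1.supp)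
      fun c c' hc v hv w hw => eq_two_of_mem_supp_of_ne (Subtype.coe_injective.ne hc) hv hw
    have (c : {c // IsFin c}) : Finite (M.restrict c.1.supp).Group := c.2
    exact Finite.of_equiv _ φ.symm.toEquiv
  · have h_euclidean (i : Fin k) := (finite_or_exists_mulEquiv_of_slender
      (M.restrict (e.symm i).1.supp).toCoxeterSystem (connected_coxeterDiagram_restrict_supp _)
      (slender_restrict_supp hM _)).resolve_left (e.symm i).2
    choose d W hW ψ using h_euclidean
    obtain ⟨φ⟩ := nonempty_mulEquiv_pi_restrict (M := M) (S := fun i => (e.symm i).1.supp)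
      fun i j hij v hv w hw => eq_two_of_mem_supp_of_ne
        (Subtype.coe_injective.ne (e.symm.injective.ne hij)) hv hw
    exact ⟨d, W, hW, ⟨φ.trans (MulEquiv.piCongrRight fun i => (ψ i).some)⟩⟩

end Components

section EuclideanReflectionGroup

open Set
open scoped RealInnerProductSpace

section LinearPart

variable {E : Type*} [NormedAddCommGroup E] [InnerProductSpace ℝ E]

theorem finite_of_finite_image2_inner [FiniteDimensional ℝ E] {s : Set E}
    (hs : (image2 (inner ℝ) s s).Finite) : s.Finite := by
  obtain ⟨b, hbs, hspan, hb⟩ := exists_linearIndependent ℝ s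
  have : Finite b := hb.setFinite
  refine Finite.of_finite_image (f := fun x (u : b) => ⟪(u : E), x⟫) ?_ ?_
  · refine (Finite.pi fun _ : b => hs).subset ?_
    rintro _ ⟨x, hx, rfl⟩ u -
    exact mem_image2_of_mem (hbs u.2) hx
  · intro x hx y hy hxy
    have hmem : x - y ∈ Submodule.span ℝ b := by
      rw [hspan]
      exact Submodule.sub_mem _ (Submodule.subset_span hx) (Submodule.subset_span hy)
    have horth : Submodule.span ℝ b ≤ (ℝ ∙ (x - y))ᗮ := by
      refine Submodule.span_le.mpr fun u hu => ?_
      rw [SetLike.mem_coe, Submodule.mem_orthogonal_singleton_iff_inner_left, inner_sub_right,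
        sub_eq_zero]
      exact congrFun hxy ⟨u, hu⟩
    have := Submodule.mem_orthogonal_singleton_iff_inner_left.mp (horth hmem)
    exact sub_eq_zero.mp (inner_self_eq_zero.mp this)

theorem exists_unit_normal {U : Submodule ℝ E} [U.HasOrthogonalProjection]
    (hU : Module.finrank ℝ Uᗮ = 1) : ∃ n, ‖n‖ = 1 ∧ (ℝ ∙ n)ᗮ = U := by
  have : Nontrivial Uᗮ := Module.nontrivial_of_finrank_pos (by rw [hU]; exact one_pos)
  have : FiniteDimensional ℝ Uᗮ := Module.finite_of_finrank_eq_succ hU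
  obtain ⟨n, hn⟩ := exists_norm_eq Uᗮ zero_le_one
  have hn₀ : (n : E) ≠ 0 := by
    rw [← norm_ne_zero_iff, ← Submodule.coe_norm, hn]
    exact one_ne_zero
  have hspan : ℝ ∙ (n : E) = Uᗮ :=
    Submodule.eq_of_le_of_finrank_eq ((Submodule.span_singleton_le_iff_mem _ _).mpr n.2)
      (by rw [finrank_span_singleton hn₀, hU])
  exact ⟨n, hn, by rw [hspan, Submodule.orthogonal_orthogonal]⟩

theorem eq_one_or_eq_reflection_orthogonal {n : E} (hn : ‖n‖ = 1) {L : E ≃ₗᵢ[ℝ] E}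
    (hL : ∀ x ∈ (ℝ ∙ n)ᗮ, L x = x) : L = 1 ∨ L = (ℝ ∙ n)ᗮ.reflection := by
  have hext : ∀ L' : E ≃ₗᵢ[ℝ] E, (∀ x ∈ (ℝ ∙ n)ᗮ, L' x = x) → L n = L' n → L = L' := by
    intro L' hL' hLn
    ext x
    have hx : x - ⟪n, x⟫ • n ∈ (ℝ ∙ n)ᗮ := by
      rw [Submodule.mem_orthogonal_singleton_iff_inner_right, inner_sub_right,
        real_inner_smul_right, real_inner_self_eq_norm_sq, hn, one_pow, mul_one, sub_self]
    rw [← sub_add_cancel x (⟪n, x⟫ • n), map_add, map_add, hL _ hx, hL' _ hx, map_smul, map_smul,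
      hLn]
  have hmem : L n ∈ (ℝ ∙ n)ᗮᗮ := fun x hx => by
    rw [← hL x hx, LinearIsometryEquiv.inner_map_map]
    exact Submodule.mem_orthogonal_singleton_iff_inner_left.mp hx
  rw [Submodule.orthogonal_orthogonal, Submodule.mem_span_singleton] at hmem
  obtain ⟨a, ha⟩ := hmem
  have habs : |a| = 1 := by
    rw [← Real.norm_eq_abs, ← mul_one ‖a‖, ← hn, ← norm_smul, ha, LinearIsometryEquiv.norm_map]
  rcases eq_or_eq_neg_of_abs_eq habs with rfl | rfl
  · exact .inl (hext 1 (fun _ _ => rfl) (by simp [← ha]))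
  · refine .inr (hext _ (fun x hx => Submodule.reflection_mem_subspace_eq_self hx) ?_)
    rw [← ha, Submodule.reflection_orthogonalComplement_singleton_eq_neg, neg_one_smul]

/-- The linear part `x ↦ f x - f 0` of an isometry `f`, which is affine by the Mazur–Ulam
theorem. -/
noncomputable def linearPart : (E ≃ᵢ E) →* (E ≃ₗᵢ[ℝ] E) where
  toFun f := f.toRealLinearIsometryEquiv
  map_one' := by
    ext x
    simp
  map_mul' f g := by
    ext x
    have h := map_sub f.toRealLinearIsometryEquiv (g x) (g 0)
    simp only [IsometryEquiv.toRealLinearIsometryEquiv_apply] at h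
    simp [h]

theorem linearPart_apply (f : E ≃ᵢ E) (x : E) : linearPart f x = f x - f 0 :=
  f.toRealLinearIsometryEquiv_apply x

theorem linearPart_sub (f : E ≃ᵢ E) (x y : E) : linearPart f (x - y) = f x - f y := by
  rw [map_sub, linearPart_apply, linearPart_apply, sub_sub_sub_cancel_right]

theorem linearPart_hyperplaneReflection (n : E) (c : ℝ) :
    linearPart (hyperplaneReflection n c) = (ℝ ∙ n)ᗮ.reflection := by
  ext x
  rw [linearPart_apply, hyperplaneReflection_sub_hyperplaneReflection, sub_zero]

theorem mul_hyperplaneReflection_mul_inv {n : E} (hn : ‖n‖ = 1) (c : ℝ) (f : E ≃ᵢ E) :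
    f * hyperplaneReflection n c * f⁻¹ =
      hyperplaneReflection (linearPart f n) (c - ⟪linearPart f n, f 0⟫) := by
  rw [mul_inv_eq_iff_eq_mul]
  ext x
  have hinner : ⟪n, x⟫ = ⟪linearPart f n, f x⟫ - ⟪linearPart f n, f 0⟫ := by
    rw [← inner_sub_right, ← linearPart_apply, LinearIsometryEquiv.inner_map_map]
  have hfx : f (x - (2 * (⟪n, x⟫ + c)) • n) = f x - (2 * (⟪n, x⟫ + c)) • linearPart f n := by
    rw [← map_smul, eq_sub_iff_add_eq', ← eq_sub_iff_add_eq, ← linearPart_sub, sub_sub_cancel]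
  rw [IsometryEquiv.mul_apply, IsometryEquiv.mul_apply, hyperplaneReflection_apply hn, hfx,
    hyperplaneReflection_apply (by rw [LinearIsometryEquiv.norm_map, hn]), hinner,
    add_sub_left_comm, add_comm]

end LinearPart

section Mirrors

variable {E : Type*} [NormedAddCommGroup E] [InnerProductSpace ℝ E] {n m : E}

theorem eq_or_eq_neg_of_hyperplaneReflection_eq (hn : ‖n‖ = 1) (hm : ‖m‖ = 1) {c c' : ℝ}
    (h : hyperplaneReflection n c = hyperplaneReflection m c') : n = m ∨ n = -m := by
  have hlin := DFunLike.congr_fun (congrArg linearPart h) n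
  rw [linearPart_hyperplaneReflection, linearPart_hyperplaneReflection,
    reflection_orthogonal_span_singleton_apply hn, reflection_orthogonal_span_singleton_apply hm,
    real_inner_self_eq_norm_sq, hn, sub_right_inj, one_pow, mul_one, ← smul_smul] at hlin
  have hnm : n = ⟪m, n⟫ • m := smul_right_injective E (two_ne_zero (α := ℝ)) hlin
  have habs : |⟪m, n⟫| = 1 := by
    rw [← hn, ← Real.norm_eq_abs, ← mul_one ‖⟪m, n⟫‖, ← hm, ← norm_smul, ← hnm]
  rcases eq_or_eq_neg_of_abs_eq habs with ht | ht
  · exact .inl (by rw [hnm, ht, one_smul])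
  · exact .inr (by rw [hnm, ht, neg_one_smul])

theorem exists_common_fixedPoint_hyperplaneReflection (hn : ‖n‖ = 1) (hm : ‖m‖ = 1)
    (h1 : ⟪n, m⟫ ≠ 1) (h2 : ⟪n, m⟫ ≠ -1) (c c' : ℝ) :
    ∃ p, hyperplaneReflection n c p = p ∧ hyperplaneReflection m c' p = p := by
  set t := ⟪n, m⟫ with ht
  have hdet : 1 - t ^ 2 ≠ 0 := by
    rw [← one_pow 2, sq_sub_sq]
    exact mul_ne_zero (fun h => h2 (by linarith)) (fun h => h1 (by linarith))
  -- Cramer's rule for the Gram matrix of `n` and `m`.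
  refine ⟨((t * c' - c) / (1 - t ^ 2)) • n + ((t * c - c') / (1 - t ^ 2)) • m, ?_, ?_⟩
  · rw [hyperplaneReflection_eq_self_iff hn, inner_add_right, real_inner_smul_right,
      real_inner_smul_right, real_inner_self_eq_norm_sq, hn, ← ht]
    field_simp
    ring
  · rw [hyperplaneReflection_eq_self_iff hm, inner_add_right, real_inner_smul_right,
      real_inner_smul_right, real_inner_self_eq_norm_sq, hm, real_inner_comm, ← ht]
    field_simp
    ring

/-- The unit normals of the mirrors of the hyperplane reflections in a group of isometries. -/
def mirrorNormals (W : Subgroup (E ≃ᵢ E)) : Set E :=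
  {n | ‖n‖ = 1 ∧ ∃ c, hyperplaneReflection n c ∈ W}

theorem linearPart_mem_mirrorNormals {W : Subgroup (E ≃ᵢ E)} {f : E ≃ᵢ E} (hf : f ∈ W)
    (hn : n ∈ mirrorNormals W) : linearPart f n ∈ mirrorNormals W := by
  obtain ⟨hn, c, hc⟩ := hn
  refine ⟨by rw [LinearIsometryEquiv.norm_map, hn], c - ⟪linearPart f n, f 0⟫, ?_⟩
  rw [← mul_hyperplaneReflection_mul_inv hn]
  exact W.mul_mem (W.mul_mem hf hc) (W.inv_mem hf)

theorem finite_setOf_exists_hyperplaneReflection_mem {F : Set (E ≃ᵢ E)} (hF : F.Finite) :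
    {n : E | ‖n‖ = 1 ∧ ∃ c, hyperplaneReflection n c ∈ F}.Finite := by
  have hfiber : ∀ f, {n : E | ‖n‖ = 1 ∧ ∃ c, hyperplaneReflection n c = f}.Finite := fun f => by
    rcases eq_empty_or_nonempty {n : E | ‖n‖ = 1 ∧ ∃ c, hyperplaneReflection n c = f} with
      h | ⟨m, hm, c, hc⟩
    · rw [h]
      exact finite_empty
    · refine (toFinite {m, -m}).subset ?_
      rintro n ⟨hn, c', hc'⟩
      exact eq_or_eq_neg_of_hyperplaneReflection_eq hn hm (hc'.trans hc.symm)
  refine (hF.biUnion fun f _ => hfiber f).subset ?_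
  rintro n ⟨hn, c, hc⟩
  exact mem_biUnion hc ⟨hn, c, rfl⟩

/-- Two non-parallel mirrors meet, and the meeting point can be moved into a compact fundamental
set, so up to conjugation only finitely many pairs of mirrors occur. -/
theorem finite_mirrorNormals [FiniteDimensional ℝ E] {W : Subgroup (E ≃ᵢ E)} {K : Set E}
    (hfin : {f | f ∈ W ∧ (f '' K ∩ K).Nonempty}.Finite) (hK : ∀ x, ∃ f ∈ W, f x ∈ K) :
    (mirrorNormals W).Finite := by
  set N := {n : E | ‖n‖ = 1 ∧
    ∃ c, hyperplaneReflection n c ∈ {f | f ∈ W ∧ (f '' K ∩ K).Nonempty}}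
  have hNfin : N.Finite := finite_setOf_exists_hyperplaneReflection_mem hfin
  have hconj : ∀ {n c p h}, ‖n‖ = 1 → hyperplaneReflection n c ∈ W →
      hyperplaneReflection n c p = p → h ∈ W → h p ∈ K → linearPart h n ∈ N := by
    intro n c p h hn hc hp hh hpK
    refine ⟨by rw [LinearIsometryEquiv.norm_map, hn], c - ⟪linearPart h n, h 0⟫, ?_⟩
    rw [← mul_hyperplaneReflection_mul_inv hn]
    refine ⟨W.mul_mem (W.mul_mem hh hc) (W.inv_mem hh), h p, ⟨h p, hpK, ?_⟩, hpK⟩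
    rw [IsometryEquiv.mul_apply, IsometryEquiv.mul_apply, IsometryEquiv.inv_apply_self, hp]
  refine finite_of_finite_image2_inner
    (((hNfin.image2 (inner ℝ) hNfin).union (toFinite {1, -1})).subset ?_)
  rintro _ ⟨n, ⟨hn, c, hc⟩, m, ⟨hm, c', hc'⟩, rfl⟩
  by_cases h1 : ⟪n, m⟫ = 1
  · exact .inr (.inl h1)
  by_cases h2 : ⟪n, m⟫ = -1
  · exact .inr (.inr h2)
  obtain ⟨p, hp, hp'⟩ := exists_common_fixedPoint_hyperplaneReflection hn hm h1 h2 c c'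
  obtain ⟨h, hh, hpK⟩ := hK p
  exact .inl ⟨linearPart h n, hconj hn hc hp hh hpK, linearPart h m, hconj hm hc' hp' hh hpK,
    LinearIsometryEquiv.inner_map_map _ _ _⟩

end Mirrors

section PointGroup

variable {d : ℕ}

theorem IsAffineReflection.exists_eq_hyperplaneReflection
    {f : EuclideanSpace ℝ (Fin d) ≃ᵢ EuclideanSpace ℝ (Fin d)} (hf : IsAffineReflection f) :
    ∃ n c, ‖n‖ = 1 ∧ f = hyperplaneReflection n c := by
  obtain ⟨hinv, hne, s, hs, hd⟩ := hf
  obtain ⟨p, hp⟩ : ∃ p, f p = p := by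
    refine ⟨midpoint ℝ 0 (f 0), ?_⟩
    rw [f.map_midpoint, midpoint_comm, ← IsometryEquiv.mul_apply, hinv, IsometryEquiv.coe_one, id]
  have hps : p ∈ (s : Set _) := by rwa [hs]
  have hdir : ∀ x ∈ s.direction, linearPart f x = x := fun x hx => by
    have hxp : f (x + p) = x + p := by
      have := (AffineSubspace.vadd_mem_iff_mem_direction x hps).mpr hx
      rwa [← SetLike.mem_coe, hs] at this
    rw [← add_sub_cancel_right x p, linearPart_sub, hxp, hp]
  have hcodim : Module.finrank ℝ s.directionᗮ = 1 := by
    have := s.direction.finrank_add_finrank_orthogonal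
    rw [finrank_euclideanSpace_fin] at this
    omega
  obtain ⟨n, hn, hspan⟩ := exists_unit_normal hcodim
  have hfx : ∀ x, f x = linearPart f (x - p) + p := fun x => by
    rw [linearPart_sub, hp, sub_add_cancel]
  rcases eq_one_or_eq_reflection_orthogonal hn fun x hx => hdir x (hspan ▸ hx) with h1 | h1
  · refine absurd (IsometryEquiv.ext fun x => ?_) hne
    rw [hfx, h1, LinearIsometryEquiv.coe_one, id, sub_add_cancel, IsometryEquiv.coe_one, id]
  · refine ⟨n, -⟪n, p⟫, hn, IsometryEquiv.ext fun x => ?_⟩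
    rw [hfx, h1, ← hyperplaneReflection_sub_hyperplaneReflection n (-⟪n, p⟫),
      (hyperplaneReflection_eq_self_iff hn _).mpr (neg_neg _).symm, sub_add_cancel]

variable {W : Subgroup (EuclideanSpace ℝ (Fin d) ≃ᵢ EuclideanSpace ℝ (Fin d))}

namespace IsIrreducibleEuclideanReflectionSubgroup

theorem linearPart_eq_self_of_mem_orthogonal (hW : IsIrreducibleEuclideanReflectionSubgroup W)
    {f : EuclideanSpace ℝ (Fin d) ≃ᵢ EuclideanSpace ℝ (Fin d)} (hf : f ∈ W)
    {v : EuclideanSpace ℝ (Fin d)} (hv : v ∈ (Submodule.span ℝ (mirrorNormals W))ᗮ) :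
    linearPart f v = v := by
  replace hf := hW.generated_by_reflections.le hf
  induction hf using Subgroup.closure_induction with
  | mem f hf =>
    obtain ⟨n, c, hn, rfl⟩ := hf.2.exists_eq_hyperplaneReflection
    rw [linearPart_hyperplaneReflection]
    refine Submodule.reflection_mem_subspace_eq_self ?_
    rw [Submodule.mem_orthogonal_singleton_iff_inner_right]
    exact hv n (Submodule.subset_span ⟨hn, c, hf.1⟩)
  | one => rw [map_one, LinearIsometryEquiv.coe_one, id]
  | mul f g _ _ ihf ihg => rw [map_mul, LinearIsometryEquiv.coe_mul, Function.comp_apply, ihg, ihf]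
  | inv f _ ih => rw [map_inv, LinearIsometryEquiv.inv_def, LinearIsometryEquiv.symm_apply_eq, ih]

theorem finite_map_linearPart (hW : IsIrreducibleEuclideanReflectionSubgroup W) :
    Finite (W.map linearPart) := by
  obtain ⟨K, hK, hcover⟩ := hW.compact_quotient
  have : Finite (mirrorNormals W) :=
    finite_mirrorNormals (hW.properly_discontinuous K K hK hK) hcover
  refine Finite.of_injective (fun (L : W.map linearPart) (n : mirrorNormals W) =>
    (⟨L.1 n, ?_⟩ : mirrorNormals W)) ?_
  · obtain ⟨f, hf, hfL⟩ := L.2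
    exact hfL ▸ linearPart_mem_mirrorNormals hf n.2
  · rintro ⟨_, f, hf, rfl⟩ ⟨_, g, hg, rfl⟩ hfg
    refine Subtype.ext (LinearIsometryEquiv.ext fun x => ?_)
    have hspan : EqOn (linearPart f).toLinearEquiv.toLinearMap
        (linearPart g).toLinearEquiv.toLinearMap (Submodule.span ℝ (mirrorNormals W)) :=
      LinearMap.eqOn_span fun n hn => congrArg Subtype.val (congrFun hfg ⟨n, hn⟩)
    obtain ⟨y, hy, z, hz, rfl⟩ :=
      (Submodule.span ℝ (mirrorNormals W)).exists_add_mem_mem_orthogonal x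
    rw [map_add, map_add, hW.linearPart_eq_self_of_mem_orthogonal hf hz,
      hW.linearPart_eq_self_of_mem_orthogonal hg hz]
    exact congrArg (· + z) (hspan hy)

end IsIrreducibleEuclideanReflectionSubgroup

end PointGroup

section TranslationLattice

variable {E : Type*} [NormedAddCommGroup E]

/-- The lattice of vectors `v` such that the translation `x ↦ x + v` belongs to `W`. -/
def translationLattice (W : Subgroup (E ≃ᵢ E)) : AddSubgroup E where
  carrier := {v | IsometryEquiv.addRight v ∈ W}
  zero_mem' := by
    have : IsometryEquiv.addRight (0 : E) = 1 := IsometryEquiv.ext fun x => add_zero x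
    rw [mem_ofPred_eq, this]
    exact W.one_mem
  add_mem' := by
    intro v w hv hw
    have : IsometryEquiv.addRight (v + w) =
        IsometryEquiv.addRight w * IsometryEquiv.addRight v :=
      IsometryEquiv.ext fun x => (add_assoc x v w).symm
    rw [mem_ofPred_eq, this]
    exact W.mul_mem hw hv
  neg_mem' := by
    intro v hv
    have : IsometryEquiv.addRight (-v) = (IsometryEquiv.addRight v)⁻¹ := by
      rw [eq_inv_iff_mul_eq_one]
      exact IsometryEquiv.ext fun x => add_neg_cancel_right x v
    rw [mem_ofPred_eq, this]
    exact W.inv_mem hv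

theorem discreteTopology_translationLattice [ProperSpace E] {W : Subgroup (E ≃ᵢ E)}
    (hW : ∀ K L : Set E, IsCompact K → IsCompact L → {f | f ∈ W ∧ (f '' K ∩ L).Nonempty}.Finite) :
    DiscreteTopology (translationLattice W) := by
  have hfin : {v : translationLattice W | (v : E) ∈ Metric.closedBall 0 1}.Finite := by
    refine Finite.of_finite_image
      (f := fun v : translationLattice W => IsometryEquiv.addRight (v : E)) ?_ ?_
    · refine (hW {0} (Metric.closedBall 0 1) isCompact_singleton
        (isCompact_closedBall _ _)).subset ?_
      rintro _ ⟨v, hv, rfl⟩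
      exact ⟨v.2, v, ⟨0, rfl, zero_add _⟩, hv⟩
    · intro v _ w _ hvw
      have := DFunLike.congr_fun hvw 0
      exact Subtype.ext (by simpa using this)
  refine discreteTopology_of_isOpen_singleton_zero
    (isOpen_singleton_of_finite_mem_nhds 0 ?_ hfin)
  exact continuous_subtype_val.continuousAt.preimage_mem_nhds
    (Metric.closedBall_mem_nhds _ one_pos)

theorem slender_multiplicative_of_discreteTopology [NormedSpace ℝ E] [FiniteDimensional ℝ E]
    (Λ : AddSubgroup E) [DiscreteTopology Λ] : Group.Slender (Multiplicative Λ) := by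
  have : DiscreteTopology Λ.toIntSubmodule := ‹DiscreteTopology Λ›
  have : Module.Finite ℤ Λ.toIntSubmodule := inferInstance
  have : Module.Finite ℤ Λ := this
  intro H
  rw [Subgroup.fg_iff_add_fg]
  have hfg := (inferInstance : IsNoetherian ℤ Λ).noetherian
    (AddSubgroup.toIntSubmodule (Subgroup.toAddSubgroup H : AddSubgroup Λ))
  rwa [Submodule.fg_iff_addSubgroup_fg] at hfg

end TranslationLattice

theorem slender_ker_linearPart_subgroupMap {E : Type*} [NormedAddCommGroup E]
    [InnerProductSpace ℝ E] [FiniteDimensional ℝ E] (W : Subgroup (E ≃ᵢ E))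
    [DiscreteTopology (translationLattice W)] :
    Group.Slender (linearPart.subgroupMap W).ker := by
  have hker : ∀ f : (linearPart.subgroupMap W).ker, f.1.1 = IsometryEquiv.addRight (f.1.1 0) := by
    rintro ⟨f, hf⟩
    have hf : linearPart f.1 = 1 := congrArg Subtype.val hf
    ext1 x
    rw [IsometryEquiv.addRight_apply, ← sub_eq_iff_eq_add, ← linearPart_apply, hf]
    rfl
  let τ : (linearPart.subgroupMap W).ker →* Multiplicative (translationLattice W) :=
    { toFun f := .ofAdd ⟨f.1.1 0, (hker f).subst (motive := (· ∈ W)) f.1.2⟩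
      map_one' := rfl
      map_mul' f g := congrArg Multiplicative.ofAdd <| Subtype.ext <| by
        change f.1.1 (g.1.1 0) = f.1.1 0 + g.1.1 0
        rw [hker f, IsometryEquiv.addRight_apply, IsometryEquiv.addRight_apply, zero_add,
          add_comm] }
  refine slender_of_injective τ (fun f g hfg => ?_)
    (slender_multiplicative_of_discreteTopology _)
  have h0 : f.1.1 0 = g.1.1 0 := congrArg Subtype.val hfg
  exact Subtype.ext (Subtype.ext (by rw [hker f, hker g, h0]))

theorem IsIrreducibleEuclideanReflectionSubgroup.slender {d : ℕ}
    {W : Subgroup (EuclideanSpace ℝ (Fin d) ≃ᵢ EuclideanSpace ℝ (Fin d))}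
    (hW : IsIrreducibleEuclideanReflectionSubgroup W) : Group.Slender W := by
  have := hW.finite_map_linearPart
  have := discreteTopology_translationLattice hW.properly_discontinuous
  exact slender_of_slender_ker (linearPart.subgroupMap W) slender_of_finite
    (slender_ker_linearPart_subgroupMap W)

end EuclideanReflectionGroup

/-- An infinite finitely generated Coxeter group `C(Γ)` is slender if and
only if it decomposes as a direct product `C(Γ) ≅ C(Γ₁) × C(Γ₂)` where `Γ₁`, `Γ₂` are induced
subgraphs of `Γ` (given by subsets `S₁`, `S₂` of the vertex set), `C(Γ₁)` is finite, and
`C(Γ₂)` is a finite direct product of irreducible Euclidean reflection groups. -/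
theorem coxeterGroup_slender_iff_decomposition
    {V : Type} [Fintype V] (M : CoxeterMatrix V) (hinf : Infinite M.Group) :
    Group.Slender M.Group ↔
      ∃ S₁ S₂ : Set V,
        Nonempty (M.Group ≃* (M.restrict S₁).Group × (M.restrict S₂).Group) ∧
        Finite (M.restrict S₁).Group ∧
        ∃ (k : ℕ) (d : Fin k → ℕ)
          (W : ∀ i : Fin k,
            Subgroup (EuclideanSpace ℝ (Fin (d i)) ≃ᵢ EuclideanSpace ℝ (Fin (d i)))),
          (∀ i, IsIrreducibleEuclideanReflectionSubgroup (W i)) ∧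
          Nonempty ((M.restrict S₂).Group ≃* ∀ i, ↥(W i)) := by
  constructor
  · exact exists_decomposition_of_slender
  · rintro ⟨S₁, S₂, ⟨φ⟩, hfin, k, d, W, hW, ⟨ψ⟩⟩
    have hslender : Group.Slender (M.restrict S₂).Group :=
      slender_of_injective ψ.toMonoidHom ψ.injective (slender_pi fun i => (hW i).slender)
    exact slender_of_injective φ.toMonoidHom φ.injective (slender_prod slender_of_finite hslender)
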